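/- Assume (H4.1) and (H4.2). If u₁ ∈ Θ and u₂ ∈ Θ are both viscosity solutions of the Isaacs equation ∂_t w(t,x) + H⁻(t, x, w, Dw, D²w) = 0 on [0,T)×ℝⁿ with terminal condition w(T,x) = Φ(x), then u₁(t,x) = u₂(t,x) for all (t,x) ∈ [0,T]×ℝⁿ. -/

import Mathlib

noncomputable section

open scoped RealInnerProductSpace Matrix

attribute [local instance] Matrix.frobeniusNormedAddCommGroup

/-- The Euclidean state space `ℝⁿ`. -/
abbrev Eucl (n : ℕ) := EuclideanSpace ℝ (Fin n)

/-- Time derivative `∂φ/∂t (t,x)` of a function `φ : ℝ × ℝⁿ → ℝ`. -/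
def timeDeriv {n : ℕ} (φ : ℝ → Eucl n → ℝ) (t : ℝ) (x : Eucl n) : ℝ :=
  deriv (fun s => φ s x) t

/-- Spatial gradient `Dφ(t,x) ∈ ℝⁿ`. -/
def spaceGrad {n : ℕ} (φ : ℝ → Eucl n → ℝ) (t : ℝ) (x : Eucl n) : Eucl n :=
  gradient (fun y => φ t y) x

/-- Spatial Hessian `D²φ(t,x)` as an `n × n` matrix. -/
def spaceHess {n : ℕ} (φ : ℝ → Eucl n → ℝ) (t : ℝ) (x : Eucl n) :
    Matrix (Fin n) (Fin n) ℝ :=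
  Matrix.of fun i j =>
    fderiv ℝ (fun y => fderiv ℝ (fun y' => φ t y') y (EuclideanSpace.single j (1 : ℝ))) x
      (EuclideanSpace.single i (1 : ℝ))

/-- The row vector `pᵀσ ∈ ℝᵈ`. -/
def rowMul {n d : ℕ} (p : Eucl n) (M : Matrix (Fin n) (Fin d) ℝ) : Eucl d :=
  (WithLp.equiv 2 (Fin d → ℝ)).symm fun j => ∑ i, p i * M i j

/-- `φ ∈ C³_{l,b}([0,T]×ℝⁿ)`: three times continuously differentiable with all
derivatives of order 1 to 3 bounded. -/
def IsTestFunction {n : ℕ} (φ : ℝ → Eucl n → ℝ) : Prop :=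
  ContDiff ℝ 3 (fun p : ℝ × Eucl n => φ p.1 p.2) ∧
  ∀ i : ℕ, 1 ≤ i → i ≤ 3 →
    ∃ M : ℝ, ∀ p : ℝ × Eucl n,
      ‖iteratedFDeriv ℝ i (fun q : ℝ × Eucl n => φ q.1 q.2) p‖ ≤ M

/-- Viscosity subsolution of `∂_t w + G(t,x,w,Dw,D²w) = 0` on `[0,T)×ℝⁿ`
with terminal condition `w(T,·) = g`. -/
def IsViscositySubsolution {n : ℕ} (T : ℝ)
    (G : ℝ → Eucl n → ℝ → Eucl n → Matrix (Fin n) (Fin n) ℝ → ℝ)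
    (g : Eucl n → ℝ) (w : ℝ → Eucl n → ℝ) : Prop :=
  (∀ x : Eucl n, w T x ≤ g x) ∧
  ∀ φ : ℝ → Eucl n → ℝ, IsTestFunction φ →
    ∀ t ∈ Set.Ico (0 : ℝ) T, ∀ x : Eucl n,
      IsLocalMaxOn (fun p : ℝ × Eucl n => w p.1 p.2 - φ p.1 p.2)
        (Set.Icc (0 : ℝ) T ×ˢ (Set.univ : Set (Eucl n))) (t, x) →
      0 ≤ timeDeriv φ t x + G t x (φ t x) (spaceGrad φ t x) (spaceHess φ t x)

/-- Viscosity supersolution of `∂_t w + G(t,x,w,Dw,D²w) = 0` on `[0,T)×ℝⁿ`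
with terminal condition `w(T,·) = g`. -/
def IsViscositySupersolution {n : ℕ} (T : ℝ)
    (G : ℝ → Eucl n → ℝ → Eucl n → Matrix (Fin n) (Fin n) ℝ → ℝ)
    (g : Eucl n → ℝ) (w : ℝ → Eucl n → ℝ) : Prop :=
  (∀ x : Eucl n, g x ≤ w T x) ∧
  ∀ φ : ℝ → Eucl n → ℝ, IsTestFunction φ →
    ∀ t ∈ Set.Ico (0 : ℝ) T, ∀ x : Eucl n,
      IsLocalMinOn (fun p : ℝ × Eucl n => w p.1 p.2 - φ p.1 p.2)
        (Set.Icc (0 : ℝ) T ×ˢ (Set.univ : Set (Eucl n))) (t, x) →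
      timeDeriv φ t x + G t x (φ t x) (spaceGrad φ t x) (spaceHess φ t x) ≤ 0

/-- Viscosity solution: both a sub- and a supersolution. -/
def IsViscositySolution {n : ℕ} (T : ℝ)
    (G : ℝ → Eucl n → ℝ → Eucl n → Matrix (Fin n) (Fin n) ℝ → ℝ)
    (g : Eucl n → ℝ) (w : ℝ → Eucl n → ℝ) : Prop :=
  IsViscositySubsolution T G g w ∧ IsViscositySupersolution T G g w

/-- The lower Hamiltonian `H⁻`. -/
def lowerHamiltonian {n d : ℕ} {U V : Type*}
    (b : ℝ → Eucl n → U → V → Eucl n)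
    (σ : ℝ → Eucl n → U → V → Matrix (Fin n) (Fin d) ℝ)
    (f : ℝ → Eucl n → ℝ → Eucl d → U → V → ℝ)
    (t : ℝ) (x : Eucl n) (y : ℝ) (p : Eucl n) (X : Matrix (Fin n) (Fin n) ℝ) : ℝ :=
  ⨆ u : U, ⨅ v : V,
    (1 / 2) * Matrix.trace (σ t x u v * (σ t x u v)ᵀ * X)
      + ⟪p, b t x u v⟫
      + f t x y (rowMul p (σ t x u v)) u v

/-- The upper Hamiltonian `H⁺`. -/
def upperHamiltonian {n d : ℕ} {U V : Type*}
    (b : ℝ → Eucl n → U → V → Eucl n)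
    (σ : ℝ → Eucl n → U → V → Matrix (Fin n) (Fin d) ℝ)
    (f : ℝ → Eucl n → ℝ → Eucl d → U → V → ℝ)
    (t : ℝ) (x : Eucl n) (y : ℝ) (p : Eucl n) (X : Matrix (Fin n) (Fin n) ℝ) : ℝ :=
  ⨅ v : V, ⨆ u : U,
    (1 / 2) * Matrix.trace (σ t x u v * (σ t x u v)ᵀ * X)
      + ⟪p, b t x u v⟫
      + f t x y (rowMul p (σ t x u v)) u v

/-- Membership in the class `Θ` of continuous functions on `[0,T]×ℝⁿ` satisfying the
growth condition `φ(t,x)·exp{−Ã[log((|x|²+1)^{1/2})]²} → 0` as `|x| → ∞`,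
uniformly in `t ∈ [0,T]`. -/
def MemTheta {n : ℕ} (T : ℝ) (φ : ℝ → Eucl n → ℝ) : Prop :=
  ContinuousOn (fun p : ℝ × Eucl n => φ p.1 p.2)
      (Set.Icc (0 : ℝ) T ×ˢ (Set.univ : Set (Eucl n))) ∧
  ∃ A : ℝ, 0 < A ∧ ∀ ε > (0 : ℝ), ∃ R : ℝ, ∀ t ∈ Set.Icc (0 : ℝ) T, ∀ x : Eucl n,
    R ≤ ‖x‖ →
      |φ t x| * Real.exp (-A * (Real.log ((‖x‖ ^ 2 + 1) ^ ((1 : ℝ) / 2))) ^ 2) ≤ ε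

/-!
Comparison of a subsolution and a supersolution by doubling of variables. On a bounded cylinder the
difference is penalized by a barrier and by a quadratic `‖x - y‖² / (2 e)`. Both functions are
replaced by sup-convolutions, each encoded by a Legendre transform and hence semiconvex; points of
second-order differentiability near a maximum come from Alexandrov's theorem and Jensen's
perturbation argument, both obtained from Rademacher's theorem for the resolvent of the
subdifferential. They give jets ordered by the penalization, and the Lipschitz bounds on the data
make the resulting error vanish as `e → 0`.

The equation is tested at `φ t x`, not at `w t x`, so a test function may be shifted by a constant
and the Hamiltonian evaluated at the same value for both functions: no monotonicity in `w` enters.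

The barrier `exp ((log √(‖x‖² + 1) + 1)² / (c (t - a)))` is a strict supersolution of the
linearized inequality. It blows up as `t ↓ a` and dominates the growth allowed in `Θ` only on short
intervals, so comparison is propagated backwards from `T` by short steps of fixed length.
-/

section ConvexAnalysis

open Filter Topology MeasureTheory

variable {F : Type*} [NormedAddCommGroup F] [InnerProductSpace ℝ F] {C : F → ℝ} {x a : F}
  {L : F →L[ℝ] F}

/-- `a` is a (global) subgradient of `C` at `x`. Convexity of `C` is expressed below by the
existence of a subgradient at every point. -/
def IsSubgradient (C : F → ℝ) (x a : F) : Prop :=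
  ∀ y, C x + ⟪a, y - x⟫ ≤ C y

/-- `C` is touched from above at `x` by a quadratic polynomial with gradient `a` and Hessian `L`.
Only the quadratic form of `L` matters, so `L` is not required to be symmetric. -/
def HasQuadMajorantAt (C : F → ℝ) (x a : F) (L : F →L[ℝ] F) : Prop :=
  ∀ k, C (x + k) ≤ C x + ⟪a, k⟫ + ⟪L k, k⟫ / 2

/-- `C` has the second-order Peano expansion at `x` with gradient `a` and Hessian `B`. -/
def HasSecondOrderExpansionAt (C : F → ℝ) (x a : F) (B : F →L[ℝ] F) : Prop :=
  ∀ ε > 0, ∀ᶠ k in 𝓝 (0 : F), |C (x + k) - C x - ⟪a, k⟫ - ⟪B k, k⟫ / 2| ≤ ε * ‖k‖ ^ 2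

/-- `J` is the resolvent `(id + ∂C)⁻¹` of the subdifferential of `C`. -/
def IsResolvent (C : F → ℝ) (J : F → F) : Prop :=
  ∀ y, IsSubgradient C (J y) (y - J y)

lemma inner_apply_self_le (L : F →L[ℝ] F) (k : F) : ⟪L k, k⟫ ≤ ‖L‖ * ‖k‖ ^ 2 :=
  calc ⟪L k, k⟫ ≤ ‖L k‖ * ‖k‖ := real_inner_le_norm _ _
    _ ≤ ‖L‖ * ‖k‖ * ‖k‖ := by gcongr; exact L.le_opNorm k
    _ = ‖L‖ * ‖k‖ ^ 2 := by ring

lemma norm_le_of_inner_le_sq {c : F} {K ρ : ℝ} (hK : 0 ≤ K) (hρ : 0 ≤ ρ)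
    (h : ∀ k, ⟪c, k⟫ ≤ K / 2 * (ρ + ‖k‖) ^ 2) : ‖c‖ ≤ 2 * K * ρ := by
  rcases eq_or_ne c 0 with rfl | hc
  · rw [norm_zero]; positivity
  have hc0 : 0 < ‖c‖ := norm_pos_iff.mpr hc
  have hbound : ∀ s > ρ, ‖c‖ ≤ 2 * K * s := by
    intro s hs
    have hs0 : 0 < s := hρ.trans_lt hs
    have hk := h ((s / ‖c‖) • c)
    rw [inner_smul_right, real_inner_self_eq_norm_sq, norm_smul,
      Real.norm_of_nonneg (by positivity), div_mul_cancel₀ _ hc0.ne', sq ‖c‖, ← mul_assoc,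
      div_mul_cancel₀ _ hc0.ne'] at hk
    refine le_of_mul_le_mul_left (hk.trans ?_) hs0
    calc K / 2 * (ρ + s) ^ 2 ≤ K / 2 * (s + s) ^ 2 := by gcongr
      _ = s * (2 * K * s) := by ring
  have hlim : Tendsto (fun s => 2 * K * s) (𝓝[>] ρ) (𝓝 (2 * K * ρ)) :=
    (Continuous.tendsto (by fun_prop) ρ).mono_left nhdsWithin_le_nhds
  exact ge_of_tendsto hlim (eventually_nhdsWithin_of_forall hbound)

lemma IsSubgradient.inner_sub_nonneg {y b : F} (hx : IsSubgradient C x a)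
    (hy : IsSubgradient C y b) : 0 ≤ ⟪b - a, y - x⟫ := by
  have hxy := hx y
  have hyx := hy x
  rw [← neg_sub y x, inner_neg_right] at hyx
  rw [inner_sub_left]
  linarith

lemma IsSubgradient.inner_sub_le_of_quadMajorant {y b : F} (hx : IsSubgradient C x a)
    (hy : IsSubgradient C y b) {a' : F} (hL : HasQuadMajorantAt C x a' L) (k : F) :
    ⟪b - a', k⟫ ≤ ‖L‖ / 2 * (‖y - x‖ + ‖k‖) ^ 2 + ⟪a' - a, y - x⟫ := by
  have hmin := hy (y + k)
  have hsub := hx y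
  have hmaj := hL (y - x + k)
  rw [add_sub_cancel_left] at hmin
  rw [← add_assoc, add_sub_cancel, inner_add_right] at hmaj
  have hquad : ⟪L (y - x + k), y - x + k⟫ ≤ ‖L‖ * (‖y - x‖ + ‖k‖) ^ 2 :=
    (inner_apply_self_le L _).trans (by gcongr; exact norm_add_le _ _)
  rw [inner_sub_left, inner_sub_left]
  linarith

lemma HasQuadMajorantAt.eq_of_isSubgradient {b : F} (hL : HasQuadMajorantAt C x a L)
    (hb : IsSubgradient C x b) : b = a := by
  have h := norm_le_of_inner_le_sq (norm_nonneg L) le_rfl fun k => by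
    simpa using hb.inner_sub_le_of_quadMajorant hb hL k
  rwa [mul_zero, norm_le_zero_iff, sub_eq_zero] at h

lemma HasQuadMajorantAt.isSubgradient (hL : HasQuadMajorantAt C x a L)
    (hsub : ∃ b, IsSubgradient C x b) : IsSubgradient C x a := by
  obtain ⟨b, hb⟩ := hsub
  exact hL.eq_of_isSubgradient hb ▸ hb

lemma IsSubgradient.norm_sub_le_of_quadMajorant {y b : F} (hx : IsSubgradient C x a)
    (hy : IsSubgradient C y b) (hL : HasQuadMajorantAt C x a L) :
    ‖b - a‖ ≤ 2 * ‖L‖ * ‖y - x‖ :=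
  norm_le_of_inner_le_sq (norm_nonneg L) (norm_nonneg _) fun k => by
    simpa using hx.inner_sub_le_of_quadMajorant hy hL k

lemma convexOn_of_forall_exists_isSubgradient (hsub : ∀ x, ∃ a, IsSubgradient C x a) :
    ConvexOn ℝ Set.univ C := by
  refine ⟨convex_univ, fun x _ y _ s t hs ht hst => ?_⟩
  obtain ⟨g, hg⟩ := hsub (s • x + t • y)
  have hx := mul_le_mul_of_nonneg_left (hg x) hs
  have hy := mul_le_mul_of_nonneg_left (hg y) ht
  obtain rfl : t = 1 - s := by linarith
  simp only [inner_sub_right, inner_add_right, inner_smul_right, smul_eq_mul] at hx hy ⊢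
  linarith

-- Convexity upgrades the local first-order bound to a global one: divide by `t` along `x + t k`.
lemma isSubgradient_of_quadratic_le {M : ℝ} (hC : ConvexOn ℝ Set.univ C)
    (h : ∀ k, C x + ⟪a, k⟫ - M * ‖k‖ ^ 2 ≤ C (x + k)) : IsSubgradient C x a := by
  intro y
  set k := y - x with hk
  have hsegment : ∀ t ∈ Set.Ioc (0 : ℝ) 1, C x + ⟪a, k⟫ - t * (M * ‖k‖ ^ 2) ≤ C y := by
    rintro t ⟨ht, ht1⟩
    have hlow := h (t • k)
    have hconv := hC.2 (Set.mem_univ x) (Set.mem_univ y) (sub_nonneg.mpr ht1) ht.le (by ring)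
    rw [show (1 - t) • x + t • y = x + t • k by rw [hk]; module] at hconv
    rw [inner_smul_right, norm_smul, Real.norm_of_nonneg ht.le] at hlow
    simp only [smul_eq_mul] at hconv
    refine le_of_mul_le_mul_left ?_ ht
    linarith
  have hlim : Tendsto (fun t : ℝ => C x + ⟪a, k⟫ - t * (M * ‖k‖ ^ 2)) (𝓝[>] 0)
      (𝓝 (C x + ⟪a, k⟫)) :=
    (Continuous.tendsto' (by fun_prop) _ _ (by simp)).mono_left nhdsWithin_le_nhds
  exact le_of_tendsto hlim (eventually_of_mem (Ioc_mem_nhdsGT one_pos) hsegment)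

lemma exists_isResolvent [FiniteDimensional ℝ F] (hsub : ∀ x, ∃ a, IsSubgradient C x a) :
    ∃ J, IsResolvent C J := by
  have hC := convexOn_of_forall_exists_isSubgradient hsub
  have hcont : Continuous C := continuousOn_univ.mp (hC.continuousOn isOpen_univ)
  suffices ∀ y, ∃ x, IsSubgradient C x (y - x) from Classical.skolem.mp this
  intro y
  obtain ⟨a, ha⟩ := hsub y
  have hcoercive : ∀ᶠ x in cocompact F, C y + ‖y - y‖ ^ 2 / 2 ≤ C x + ‖x - y‖ ^ 2 / 2 := by
    have hnorm : Tendsto (fun x : F => ‖x - y‖) (cocompact F) atTop :=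
      tendsto_atTop_mono (fun x => norm_sub_norm_le x y)
        (tendsto_atTop_add_const_right _ (-‖y‖) tendsto_norm_cocompact_atTop)
    filter_upwards [hnorm.eventually_ge_atTop (2 * ‖a‖)] with x hx
    have hinner := neg_le_of_abs_le (abs_real_inner_le_norm a (x - y))
    rw [sub_self, norm_zero]
    nlinarith [ha x, norm_nonneg (x - y)]
  obtain ⟨x, hx⟩ := Continuous.exists_forall_le' (f := fun x => C x + ‖x - y‖ ^ 2 / 2)
    (by fun_prop) y hcoercive
  refine ⟨x, isSubgradient_of_quadratic_le hC (M := 1 / 2) fun k => ?_⟩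
  have hmin := hx (x + k)
  rw [show x + k - y = k - (y - x) by abel, norm_sub_sq_real k, real_inner_comm, norm_sub_rev x y]
    at hmin
  linarith

lemma IsResolvent.apply_add {J : F → F} (hJ : IsResolvent C J) (hx : IsSubgradient C x a) :
    J (x + a) = x := by
  have h := hx.inner_sub_nonneg (hJ (x + a))
  rw [show x + a - J (x + a) - a = -(J (x + a) - x) by abel, inner_neg_left,
    real_inner_self_eq_norm_sq] at h
  rw [← sub_eq_zero, ← norm_eq_zero]
  exact pow_eq_zero_iff two_ne_zero |>.mp (le_antisymm (by linarith) (by positivity))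

lemma IsResolvent.lipschitzWith {J : F → F} (hJ : IsResolvent C J) : LipschitzWith 1 J := by
  refine LipschitzWith.of_dist_le_mul fun y z => ?_
  rw [dist_eq_norm, dist_eq_norm, NNReal.coe_one, one_mul]
  have hmono := (hJ z).inner_sub_nonneg (hJ y)
  rw [show y - J y - (z - J z) = y - z - (J y - J z) by abel, inner_sub_left,
    real_inner_self_eq_norm_sq] at hmono
  by_contra! hlt
  nlinarith [real_inner_le_norm (y - z) (J y - J z), norm_nonneg (y - z)]

lemma norm_sub_le_of_norm_increment_le {E : Type*} [SeminormedAddCommGroup E] {ψ : ℝ → E}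
    {k K : ℝ} (h : ∀ s t, 0 ≤ s → s ≤ t → t ≤ 1 → ‖ψ t - ψ s‖ ≤ (t - s) * k + K * (t - s) ^ 2) :
    ‖ψ 1 - ψ 0‖ ≤ k := by
  have hpartition : ∀ N : ℕ, ‖ψ 1 - ψ 0‖ ≤ k + K * (1 / ((N : ℝ) + 1)) := by
    intro N
    have hN : (0 : ℝ) < (N : ℝ) + 1 := by positivity
    calc ‖ψ 1 - ψ 0‖
        = ‖∑ i ∈ Finset.range (N + 1), (ψ ((i + 1 : ℕ) / (N + 1 : ℝ)) - ψ (i / (N + 1 : ℝ)))‖ := by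
          rw [Finset.sum_range_sub fun i : ℕ => ψ (i / (N + 1 : ℝ))]
          simp [div_self hN.ne']
      _ ≤ ∑ i ∈ Finset.range (N + 1),
            (1 / ((N : ℝ) + 1) * k + K * (1 / ((N : ℝ) + 1)) ^ 2) := by
          refine norm_sum_le_of_le _ fun i hi => ?_
          have hstep : ((i + 1 : ℕ) : ℝ) / (N + 1) - i / (N + 1) = 1 / (N + 1) := by
            push_cast; ring
          rw [← hstep]
          refine h _ _ (by positivity) (by gcongr; simp) ((div_le_one hN).mpr ?_)
          exact_mod_cast Finset.mem_range.mp hi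
      _ = k + K * (1 / ((N : ℝ) + 1)) := by
          rw [Finset.sum_const, Finset.card_range, nsmul_eq_mul]
          push_cast
          field_simp
  have hlim : Tendsto (fun N : ℕ => k + K * (1 / ((N : ℝ) + 1))) atTop (𝓝 k) := by
    simpa using (tendsto_one_div_add_atTop_nhds_zero_nat.const_mul K).const_add k
  exact ge_of_tendsto' hlim hpartition

lemma abs_sub_le_of_approx_affine_slope {φ : ℝ → ℝ} {α β e : ℝ}
    (h : ∀ t ∈ Set.Icc (0 : ℝ) 1, ∃ g, |g - α - t * β| ≤ e ∧ ∀ s, φ t + g * (s - t) ≤ φ s) :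
    |φ 1 - φ 0 - α - β / 2| ≤ e := by
  have key := norm_sub_le_of_norm_increment_le (ψ := fun t => φ t - t * α - t ^ 2 / 2 * β)
    (k := e) (K := |β| / 2) fun s t hs hst ht => by
      obtain ⟨g, hg, hgs⟩ := h s ⟨hs, hst.trans ht⟩
      obtain ⟨g', hg', hgt⟩ := h t ⟨hs.trans hst, ht⟩
      have hts : 0 ≤ t - s := sub_nonneg.mpr hst
      have hlow := mul_le_mul_of_nonneg_left (abs_le.mp hg).1 hts
      have hup := mul_le_mul_of_nonneg_left (abs_le.mp hg').2 hts
      have hβ := mul_le_mul_of_nonneg_right (le_abs_self β) (sq_nonneg (t - s))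
      have hβt := hgs t
      have hβs := hgt s
      rw [Real.norm_eq_abs, abs_le]
      constructor <;> linarith
  rw [Real.norm_eq_abs] at key
  convert key using 2
  ring

lemma hasSecondOrderExpansionAt_of_isSubgradient (hsub : ∀ x, ∃ a, IsSubgradient C x a)
    {B : F →L[ℝ] F}
    (h : ∀ ε > 0, ∀ᶠ k in 𝓝 (0 : F), ∀ b, IsSubgradient C (x + k) b → ‖b - a - B k‖ ≤ ε * ‖k‖) :
    HasSecondOrderExpansionAt C x a B := by
  intro ε hε
  obtain ⟨δ, hδ, hball⟩ := Metric.eventually_nhds_iff_ball.mp (h ε hε)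
  filter_upwards [Metric.ball_mem_nhds 0 hδ] with k hk
  rw [mem_ball_zero_iff] at hk
  have key := abs_sub_le_of_approx_affine_slope (φ := fun t => C (x + t • k)) (α := ⟪a, k⟫)
    (β := ⟪B k, k⟫) (e := ε * ‖k‖ ^ 2) fun t ⟨ht0, ht1⟩ => by
      have htk : ‖t • k‖ ≤ ‖k‖ := by
        rw [norm_smul, Real.norm_of_nonneg ht0]
        exact mul_le_of_le_one_left (norm_nonneg k) ht1
      obtain ⟨b, hb⟩ := hsub (x + t • k)
      refine ⟨⟪b, k⟫, ?_, fun s => ?_⟩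
      · have hbk := hball (t • k) (mem_ball_zero_iff.mpr (htk.trans_lt hk)) b hb
        calc |⟪b, k⟫ - ⟪a, k⟫ - t * ⟪B k, k⟫| = |⟪b - a - B (t • k), k⟫| := by
              rw [inner_sub_left, inner_sub_left, map_smul, real_inner_smul_left]
          _ ≤ ‖b - a - B (t • k)‖ * ‖k‖ := abs_real_inner_le_norm _ _
          _ ≤ ε * ‖k‖ * ‖k‖ := by gcongr; exact hbk.trans (by gcongr)
          _ = ε * ‖k‖ ^ 2 := by ring
      · have hline := hb (x + s • k)
        rw [show x + s • k - (x + t • k) = (s - t) • k by module, inner_smul_right] at hline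
        linarith
  simpa using key

lemma norm_le_mul_norm_of_hasFDerivAt {E G : Type*} [NormedAddCommGroup E] [NormedSpace ℝ E]
    [NormedAddCommGroup G] [NormedSpace ℝ G] {f : E → G} {f' : E →L[ℝ] G} {y : E} {c : ℝ}
    (hf : HasFDerivAt f f' y) (h : ∀ z, ‖z - y‖ ≤ c * ‖f z - f y‖) (k : E) :
    ‖k‖ ≤ c * ‖f' k‖ := by
  have hslope := hasDerivAt_iff_tendsto_slope_zero.mp (hf.hasLineDerivAt k)
  refine ge_of_tendsto (hslope.norm.const_mul c) ?_
  filter_upwards [self_mem_nhdsWithin] with t ht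
  have ht' : 0 < ‖t‖ := norm_pos_iff.mpr ht
  have hz := h (y + t • k)
  rw [add_sub_cancel_left, norm_smul] at hz
  rw [zero_add, zero_smul, add_zero, norm_smul, norm_inv, mul_left_comm, ← div_eq_inv_mul,
    le_div_iff₀' ht']
  exact hz

/- Alexandrov's theorem at a single point: the inverse `D⁻¹` of the derivative of the resolvent is
the derivative of `id + ∂C`, and the quadratic majorant makes `D` invertible. -/
lemma IsResolvent.exists_hasSecondOrderExpansionAt [FiniteDimensional ℝ F] {J : F → F}
    (hJ : IsResolvent C J) (hsub : ∀ x, ∃ a, IsSubgradient C x a)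
    (hL : HasQuadMajorantAt C x a L) (hdiff : DifferentiableAt ℝ J (x + a)) :
    ∃ B, HasSecondOrderExpansionAt C x a B := by
  have hxa := hL.isSubgradient (hsub x)
  have hJx : J (x + a) = x := hJ.apply_add hxa
  set c : ℝ := 1 + 2 * ‖L‖
  have hc : 0 < c := by positivity
  have hexpand : ∀ z, ‖z - (x + a)‖ ≤ c * ‖J z - J (x + a)‖ := by
    intro z
    rw [hJx, show z - (x + a) = (J z - x) + (z - J z - a) by abel]
    linarith [norm_add_le (J z - x) (z - J z - a), hxa.norm_sub_le_of_quadMajorant (hJ z) hL]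
  obtain ⟨D, hD⟩ := hdiff
  have hDlow : ∀ k, ‖k‖ ≤ c * ‖D k‖ := norm_le_mul_norm_of_hasFDerivAt hD hexpand
  have hinj : Function.Injective (D : F →ₗ[ℝ] F) := by
    refine (injective_iff_map_eq_zero _).mpr fun k hk => norm_le_zero_iff.mp ?_
    simpa [show D k = 0 from hk] using hDlow k
  let D' : F ≃L[ℝ] F := (LinearEquiv.ofInjectiveEndo (D : F →ₗ[ℝ] F) hinj).toContinuousLinearEquiv
  have hDD' : ∀ k, D (D'.symm k) = k := D'.apply_symm_apply
  have hD'D : ∀ k, D'.symm (D k) = k := D'.symm_apply_apply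
  refine ⟨D'.symm - ContinuousLinearMap.id ℝ F,
    hasSecondOrderExpansionAt_of_isSubgradient hsub fun ε hε => ?_⟩
  obtain ⟨δ, hδ, hlo⟩ := Metric.eventually_nhds_iff.mp
    (hD.isLittleO.def (show 0 < ε / (c * c) by positivity))
  filter_upwards [Metric.ball_mem_nhds 0 (show 0 < δ / c by positivity)] with k hk b hb
  rw [mem_ball_zero_iff, lt_div_iff₀' hc] at hk
  have hJk : J (x + k + b) = x + k := hJ.apply_add hb
  have hz := hexpand (x + k + b)
  rw [hJk, hJx, add_sub_cancel_left] at hz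
  have hlin := hlo (y := x + k + b) (by rw [dist_eq_norm]; exact hz.trans_lt hk)
  rw [hJk, hJx, add_sub_cancel_left] at hlin
  have herr : b - a - ((D'.symm : F →L[ℝ] F) - ContinuousLinearMap.id ℝ F) k =
      -D'.symm (k - D (x + k + b - (x + a))) := by
    rw [map_sub, hD'D]
    change b - a - (D'.symm k - k) = _
    abel
  rw [herr, norm_neg]
  calc ‖D'.symm (k - D (x + k + b - (x + a)))‖ ≤ c * ‖k - D (x + k + b - (x + a))‖ := by
        simpa only [hDD'] using hDlow (D'.symm (k - D (x + k + b - (x + a))))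
    _ ≤ c * (ε / (c * c) * (c * ‖k‖)) := by gcongr; exact hlin.trans (by gcongr)
    _ = ε * ‖k‖ := by field_simp

/- Jensen's lemma. The slopes `p` fill a ball, and `p` is the image of `x + a` under a Lipschitz
map, so the points `x + a` cannot all lie in the null set where `J` is not differentiable. -/
lemma IsResolvent.exists_differentiableAt_of_quadMajorant [FiniteDimensional ℝ F] {J : F → F}
    (hJ : IsResolvent C J) (hsub : ∀ x, ∃ a, IsSubgradient C x a) {r : ℝ} (hr : 0 < r)
    (hmaj : ∀ p, ‖p‖ < r → ∃ x, HasQuadMajorantAt C x (L x + p) L) :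
    ∃ p, ‖p‖ < r ∧ ∃ x, HasQuadMajorantAt C x (L x + p) L ∧
      DifferentiableAt ℝ J (x + (L x + p)) := by
  let _ : MeasurableSpace F := borel F
  have _ : BorelSpace F := ⟨rfl⟩
  set μ : Measure F := Measure.hausdorffMeasure (Module.finrank ℝ F : ℝ) with hμ
  by_contra! hcon
  set S : Set F := {y | ¬ DifferentiableAt ℝ J y}
  have hS : μ S = 0 := hJ.lipschitzWith.ae_differentiableAt
  have hlip : LipschitzWith (1 + 1 + ‖L‖₊ * 1) (fun y => y - J y - L (J y)) :=
    (LipschitzWith.id.sub hJ.lipschitzWith).sub (L.lipschitz.comp hJ.lipschitzWith)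
  have hball : Metric.ball 0 r ⊆ (fun y => y - J y - L (J y)) '' S := by
    intro p hp
    obtain ⟨x, hx⟩ := hmaj p (mem_ball_zero_iff.mp hp)
    refine ⟨x + (L x + p), hcon p (mem_ball_zero_iff.mp hp) x hx, ?_⟩
    simp only [hJ.apply_add (hx.isSubgradient (hsub x))]
    abel
  have himage : μ ((fun y => y - J y - L (J y)) '' S) = 0 := by
    have := hlip.hausdorffMeasure_image_le (d := Module.finrank ℝ F) (by positivity) S
    rwa [← hμ, hS, mul_zero, nonpos_iff_eq_zero] at this
  exact (Metric.measure_ball_pos μ 0 hr).ne' (measure_mono_null hball himage)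

theorem exists_quadMajorant_hasSecondOrderExpansionAt [FiniteDimensional ℝ F]
    (hsub : ∀ x, ∃ a, IsSubgradient C x a) {r : ℝ} (hr : 0 < r)
    (hmaj : ∀ p, ‖p‖ < r → ∃ x, HasQuadMajorantAt C x (L x + p) L) :
    ∃ p, ‖p‖ < r ∧ ∃ x, HasQuadMajorantAt C x (L x + p) L ∧
      ∃ B, HasSecondOrderExpansionAt C x (L x + p) B := by
  obtain ⟨J, hJ⟩ := exists_isResolvent hsub
  obtain ⟨p, hp, x, hx, hdiff⟩ := hJ.exists_differentiableAt_of_quadMajorant hsub hr hmaj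
  exact ⟨p, hp, x, hx, hJ.exists_hasSecondOrderExpansionAt hsub hx hdiff⟩

end ConvexAnalysis

section Legendre

open Filter Topology

variable {F : Type*} [NormedAddCommGroup F] [InnerProductSpace ℝ F]
variable {K : Set F} {g : F → ℝ}

/-- Legendre transform of `g` restricted to `K`. For `g = ‖·‖² / 2 - lam * u` it is, up to a
quadratic and the factor `lam`, the sup-convolution of `u` over `K`. -/
def legendre (K : Set F) (g : F → ℝ) (x : F) : ℝ :=
  sSup ((fun z => ⟪z, x⟫ - g z) '' K)

lemma le_legendre (hK : IsCompact K) (hg : ContinuousOn g K) (x : F) {z : F} (hz : z ∈ K) :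
    ⟪z, x⟫ - g z ≤ legendre K g x :=
  le_csSup (hK.image_of_continuousOn (by fun_prop)).bddAbove ⟨z, hz, rfl⟩

lemma exists_legendre_eq (hK : IsCompact K) (hne : K.Nonempty) (hg : ContinuousOn g K) (x : F) :
    ∃ z ∈ K, legendre K g x = ⟪z, x⟫ - g z :=
  let ⟨z, hz, h⟩ := hK.exists_sSup_image_eq hne (f := fun z => ⟪z, x⟫ - g z) (by fun_prop)
  ⟨z, hz, h⟩

lemma isSubgradient_legendre (hK : IsCompact K) (hg : ContinuousOn g K) {x z : F} (hz : z ∈ K)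
    (hx : legendre K g x = ⟪z, x⟫ - g z) : IsSubgradient (legendre K g) x z := by
  intro y
  rw [hx, inner_sub_right]
  linarith [le_legendre hK hg y hz]

lemma exists_isSubgradient_legendre (hK : IsCompact K) (hne : K.Nonempty) (hg : ContinuousOn g K)
    (x : F) : ∃ z, IsSubgradient (legendre K g) x z :=
  let ⟨z, hz, h⟩ := exists_legendre_eq hK hne hg x
  ⟨z, isSubgradient_legendre hK hg hz h⟩

lemma legendre_le_mul_norm_add (hK : IsCompact K) (hne : K.Nonempty) (hg : ContinuousOn g K)
    {R : ℝ} (hR : ∀ z ∈ K, ‖z‖ ≤ R) (x : F) : legendre K g x ≤ R * ‖x‖ + legendre K g 0 := by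
  obtain ⟨z, hz, h⟩ := exists_legendre_eq hK hne hg x
  have h₀ := le_legendre hK hg 0 hz
  rw [inner_zero_right] at h₀
  have hzx : ⟪z, x⟫ ≤ R * ‖x‖ := (real_inner_le_norm z x).trans (by gcongr; exact hR z hz)
  linarith

lemma exists_quadMajorant_of_linear_growth [FiniteDimensional ℝ F] {C : F → ℝ}
    (hC : Continuous C) {R c : ℝ} (hgrow : ∀ x, C x ≤ R * ‖x‖ + c) {L : F →L[ℝ] F}
    (hsym : ∀ h k, ⟪L h, k⟫ = ⟪h, L k⟫) (hpos : ∀ h, ‖h‖ ^ 2 ≤ ⟪L h, h⟫) (p : F) :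
    ∃ x, HasQuadMajorantAt C x (L x + p) L := by
  set f : F → ℝ := fun x => C x - ⟪L x, x⟫ / 2 - ⟪p, x⟫ with hf
  have hfar : ∀ᶠ x in cocompact F, f x ≤ f 0 := by
    have hquad : Tendsto (fun s : ℝ => s * (s / 2 - (R + ‖p‖))) atTop atTop :=
      tendsto_id.atTop_mul_atTop₀ (tendsto_atTop_add_const_right _ _
        (tendsto_id.atTop_div_const (by norm_num)))
    filter_upwards [(hquad.comp (tendsto_norm_cocompact_atTop (E := F))).eventually_ge_atTop
      (c - C 0)] with x hx
    have hpx : -(‖p‖ * ‖x‖) ≤ ⟪p, x⟫ := neg_le_of_abs_le (abs_real_inner_le_norm p x)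
    simp only [hf, map_zero, inner_zero_right, Function.comp_apply] at *
    nlinarith [hgrow x, hpos x]
  obtain ⟨x, hx⟩ := Continuous.exists_forall_ge' (f := f) (by fun_prop) 0 hfar
  refine ⟨x, fun k => ?_⟩
  have hxk := hx (x + k)
  have hcross : ⟪L k, x⟫ = ⟪L x, k⟫ := by rw [hsym, real_inner_comm]
  simp only [hf, map_add, inner_add_left, inner_add_right, hcross] at hxk
  rw [inner_add_left]
  linarith

lemma exists_legendre_second_order [FiniteDimensional ℝ F] (hK : IsCompact K) (hne : K.Nonempty)
    (hg : ContinuousOn g K) {L : F →L[ℝ] F} (hsym : ∀ h k, ⟪L h, k⟫ = ⟪h, L k⟫)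
    (hpos : ∀ h, ‖h‖ ^ 2 ≤ ⟪L h, h⟫) {r : ℝ} (hr : 0 < r) :
    ∃ p, ‖p‖ < r ∧ ∃ x, ∃ z ∈ K, z = L x + p ∧ legendre K g x = ⟪z, x⟫ - g z ∧
      HasQuadMajorantAt (legendre K g) x z L ∧
      ∃ B, HasSecondOrderExpansionAt (legendre K g) x z B := by
  obtain ⟨R, hR⟩ : ∃ R, ∀ z ∈ K, ‖z‖ ≤ R := hK.isBounded.exists_norm_le
  have hsub := exists_isSubgradient_legendre hK hne hg
  have hcont : Continuous (legendre K g) := 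
    continuousOn_univ.mp ((convexOn_of_forall_exists_isSubgradient hsub).continuousOn isOpen_univ)
  obtain ⟨p, hp, x, hmaj, B, hB⟩ := exists_quadMajorant_hasSecondOrderExpansionAt hsub hr
    fun p _ => exists_quadMajorant_of_linear_growth hcont
      (legendre_le_mul_norm_add hK hne hg hR) hsym hpos p
  obtain ⟨z, hz, hxz⟩ := exists_legendre_eq hK hne hg x
  obtain rfl : z = L x + p := hmaj.eq_of_isSubgradient (isSubgradient_legendre hK hg hz hxz)
  exact ⟨p, hp, x, _, hz, rfl, hxz, hmaj, B, hB⟩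

lemma HasQuadMajorantAt.sub_quadratic_le {C : F → ℝ} {L : F →L[ℝ] F} {x p : F}
    (hsym : ∀ h k, ⟪L h, k⟫ = ⟪h, L k⟫) (h : HasQuadMajorantAt C x (L x + p) L) (y : F) :
    C y - ⟪L y, y⟫ / 2 - ⟪p, y⟫ ≤ C x - ⟪L x, x⟫ / 2 - ⟪p, x⟫ := by
  have hy := h (y - x)
  rw [add_sub_cancel, map_sub, inner_sub_left, inner_sub_right, inner_sub_right, inner_sub_right,
    inner_add_left, inner_add_left, hsym y x, real_inner_comm (L x) y] at hy
  linarith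

end Legendre

section SupConvolution

open Filter Topology

variable {F : Type*} [NormedAddCommGroup F] {K : Set F} {u : F → ℝ} {lam : ℝ}

/-- The function whose Legendre transform `C` encodes the sup-convolution of `u` with parameter
`lam`: `sup_z (u z - ‖z - x‖ ^ 2 / (2 * lam)) = (C x - ‖x‖ ^ 2 / 2) / lam`. -/
def supConvKernel (lam : ℝ) (u : F → ℝ) (z : F) : ℝ :=
  ‖z‖ ^ 2 / 2 - lam * u z

lemma continuousOn_supConvKernel (hu : ContinuousOn u K) (lam : ℝ) :
    ContinuousOn (supConvKernel lam u) K := by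
  unfold supConvKernel
  fun_prop

variable [InnerProductSpace ℝ F]

/-- `u` restricted to `K` has at `z` a second-order superjet with gradient `a` and Hessian `B`. -/
def HasUpperJet (K : Set F) (u : F → ℝ) (z a : F) (B : F →L[ℝ] F) : Prop :=
  ∀ ε > 0, ∀ᶠ k in 𝓝 (0 : F), z + k ∈ K →
    u (z + k) ≤ u z + ⟪a, k⟫ + ⟪B k, k⟫ / 2 + ε * ‖k‖ ^ 2

lemma HasSecondOrderExpansionAt.hasUpperJet (hK : IsCompact K) (hu : ContinuousOn u K)
    (hlam : 0 < lam) {x z : F} {B : F →L[ℝ] F}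
    (hB : HasSecondOrderExpansionAt (legendre K (supConvKernel lam u)) x z B)
    (hxz : legendre K (supConvKernel lam u) x = ⟪z, x⟫ - supConvKernel lam u z) :
    HasUpperJet K u z (lam⁻¹ • (z - x)) (lam⁻¹ • (B - ContinuousLinearMap.id ℝ F)) := by
  intro ε hε
  filter_upwards [hB (lam * ε) (by positivity)] with k hk hkK
  have hconv := le_legendre hK (continuousOn_supConvKernel hu lam) (x + k) hkK
  have hnorm : ‖z + k‖ ^ 2 = ‖z‖ ^ 2 + 2 * ⟪z, k⟫ + ‖k‖ ^ 2 := norm_add_sq_real z k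
  have hinner : ⟪z + k, x + k⟫ = ⟪z, x⟫ + ⟪z, k⟫ + ⟪x, k⟫ + ‖k‖ ^ 2 := by
    rw [inner_add_left, inner_add_right, inner_add_right, real_inner_self_eq_norm_sq,
      real_inner_comm x k]
    ring
  have hscaled : lam * u (z + k) ≤ lam * u z + (⟪z, k⟫ - ⟪x, k⟫) + (⟪B k, k⟫ - ‖k‖ ^ 2) / 2 +
      lam * ε * ‖k‖ ^ 2 := by
    simp only [supConvKernel] at hconv hxz
    linarith [(abs_le.mp hk).2]
  simp only [_root_.smul_apply, _root_.sub_apply, ContinuousLinearMap.id_apply,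
    real_inner_smul_left, inner_sub_left, real_inner_self_eq_norm_sq]
  refine le_of_mul_le_mul_left (hscaled.trans_eq ?_) hlam
  field_simp

/-- The Hessian of the quadratic that touches the Legendre transform when `⟪A z, z⟫ / 2` is
subtracted from the function being sup-convolved. -/
def penalizedHessian (lam : ℝ) (A : F →L[ℝ] F) : F →L[ℝ] F :=
  ContinuousLinearMap.id ℝ F + lam • A

lemma inner_penalizedHessian (lam : ℝ) (A : F →L[ℝ] F) (h k : F) :
    ⟪penalizedHessian lam A h, k⟫ = ⟪h, k⟫ + lam * ⟪A h, k⟫ := by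
  rw [penalizedHessian, _root_.add_apply, inner_add_left, ContinuousLinearMap.id_apply,
    _root_.smul_apply, real_inner_smul_left]

lemma penalizedHessian_symm {A : F →L[ℝ] F} (hsym : ∀ h k, ⟪A h, k⟫ = ⟪h, A k⟫) (lam : ℝ)
    (h k : F) : ⟪penalizedHessian lam A h, k⟫ = ⟪h, penalizedHessian lam A k⟫ := by
  rw [inner_penalizedHessian, real_inner_comm (penalizedHessian lam A k), inner_penalizedHessian,
    real_inner_comm k h, hsym h k, real_inner_comm h (A k)]

lemma norm_sq_le_inner_penalizedHessian {A : F →L[ℝ] F} (hpos : ∀ h, 0 ≤ ⟪A h, h⟫)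
    (hlam : 0 ≤ lam) (h : F) : ‖h‖ ^ 2 ≤ ⟪penalizedHessian lam A h, h⟫ := by
  rw [inner_penalizedHessian, real_inner_self_eq_norm_sq]
  exact le_add_of_nonneg_right (mul_nonneg hlam (hpos h))

lemma supConvolution_max_le (hK : IsCompact K) (hu : ContinuousOn u K) {A : F →L[ℝ] F}
    (hsym : ∀ h k, ⟪A h, k⟫ = ⟪h, A k⟫) {x z p : F}
    (hz : z = penalizedHessian lam A x + p)
    (hxz : legendre K (supConvKernel lam u) x = ⟪z, x⟫ - supConvKernel lam u z)
    (hmaj : HasQuadMajorantAt (legendre K (supConvKernel lam u)) x z (penalizedHessian lam A))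
    {z' : F} (hz' : z' ∈ K) :
    lam * (u z' - ⟪A z', z'⟫ / 2) + ‖z - x‖ ^ 2 / 2 ≤
      lam * (u z - ⟪A x, x⟫ / 2) + ⟪p, z' - x⟫ := by
  have hmax := (hz ▸ hmaj).sub_quadratic_le (penalizedHessian_symm hsym lam) z'
  have hle := le_legendre hK (continuousOn_supConvKernel hu lam) z' hz'
  rw [hxz] at hmax
  simp only [inner_penalizedHessian, real_inner_self_eq_norm_sq, supConvKernel] at hmax hle
  rw [norm_sub_sq_real, inner_sub_right]
  linarith

lemma sq_le_of_half_sq_le {d Q : ℝ} (hlam0 : 0 ≤ lam) (hlam1 : lam ≤ 1)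
    (h : d ^ 2 / 2 ≤ lam * Q / 2 + lam ^ 2 * d) : d ^ 2 ≤ lam * (2 * Q + 4) := by
  have hpow : lam ^ 2 * lam ^ 2 ≤ lam := by
    rw [← pow_add]; exact pow_le_of_le_one hlam0 hlam1 (by norm_num)
  nlinarith [sq_nonneg (d - 2 * lam ^ 2)]

lemma abs_inner_apply_self_sub_le {A : F →L[ℝ] F} (hsym : ∀ h k, ⟪A h, k⟫ = ⟪h, A k⟫) (x z : F) :
    |⟪A z, z⟫ - ⟪A x, x⟫| ≤ ‖A‖ * ‖z - x‖ * (‖z‖ + ‖x‖) :=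
  calc |⟪A z, z⟫ - ⟪A x, x⟫| = |⟪A (z - x), z + x⟫| := by
        rw [map_sub, inner_sub_left, inner_add_right, inner_add_right, hsym z x,
          real_inner_comm (A x) z]
        ring_nf
    _ ≤ ‖A (z - x)‖ * ‖z + x‖ := abs_real_inner_le_norm _ _
    _ ≤ ‖A‖ * ‖z - x‖ * (‖z‖ + ‖x‖) := by
        gcongr
        exacts [A.le_opNorm _, norm_add_le z x]

lemma exists_supConvolution_parameters {Q c η : ℝ} (hQ : 0 ≤ Q) (hc : 0 < c) (hη : 0 < η) :
    ∃ s > 0, s ≤ 1 ∧ s * c ≤ η ∧ ∃ lam > 0, lam ≤ s ∧ lam * (2 * Q + 4) = s ^ 2 := by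
  have hs0 : 0 < min 1 (η / c) := by positivity
  have hs1 : min 1 (η / c) ≤ 1 := min_le_left _ _
  have hlam : (min 1 (η / c)) ^ 2 / (2 * Q + 4) * (2 * Q + 4) = (min 1 (η / c)) ^ 2 :=
    div_mul_cancel₀ _ (by positivity)
  have hlam0 : 0 < (min 1 (η / c)) ^ 2 / (2 * Q + 4) := by positivity
  exact ⟨_, hs0, hs1, (le_div_iff₀ hc).mp (min_le_right _ _), _, hlam0, by nlinarith, hlam⟩

lemma sub_quadratic_le_of_penalized_max {A : F →L[ℝ] F} (hsym : ∀ h k, ⟪A h, k⟫ = ⟪h, A k⟫)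
    {x z z' : F} {s R : ℝ} (hlam0 : 0 < lam) (hlams : lam ≤ s) (hs1 : s ≤ 1) (hz : ‖z‖ ≤ R)
    (hz' : ‖z'‖ ≤ R) (hzx : ‖z - x‖ ≤ s)
    (hmax : lam * (u z' - ⟪A z', z'⟫ / 2) ≤
      lam * (u z - ⟪A x, x⟫ / 2) + lam ^ 2 * ‖z' - x‖) :
    u z' - ⟪A z', z'⟫ / 2 ≤ u z - ⟪A z, z⟫ / 2 + s * ((2 * R + 1) * (‖A‖ + 1)) := by
  have hx : ‖x‖ ≤ R + 1 := by linarith [norm_sub_norm_le x z, norm_sub_rev x z]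
  have hz'x : ‖z' - x‖ ≤ 2 * R + 1 := (norm_sub_le _ _).trans (by linarith)
  have hquad : ⟪A z, z⟫ - ⟪A x, x⟫ ≤ ‖A‖ * s * (2 * R + 1) :=
    (le_abs_self _).trans ((abs_inner_apply_self_sub_le hsym x z).trans
      (mul_le_mul (by gcongr) (by linarith) (by positivity)
        (mul_nonneg (norm_nonneg A) (hlam0.le.trans hlams))))
  have hscaled : u z' - ⟪A z', z'⟫ / 2 ≤ u z - ⟪A x, x⟫ / 2 + lam * ‖z' - x‖ :=
    le_of_mul_le_mul_left (hmax.trans_eq (by ring)) hlam0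
  have hlin : lam * ‖z' - x‖ ≤ s * (2 * R + 1) :=
    mul_le_mul hlams hz'x (norm_nonneg _) (hlam0.le.trans hlams)
  have hpos : 0 ≤ ‖A‖ * s * (2 * R + 1) :=
    mul_nonneg (mul_nonneg (norm_nonneg A) (hlam0.le.trans hlams)) ((norm_nonneg _).trans hz'x)
  linarith

lemma norm_gradient_sub_le {A : F →L[ℝ] F} {x z p : F} {s : ℝ} (hlam0 : 0 < lam) (hlams : lam ≤ s)
    (hz : z = penalizedHessian lam A x + p) (hp : ‖p‖ ≤ lam ^ 2) (hzx : ‖z - x‖ ≤ s) :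
    ‖lam⁻¹ • (z - x) - A z‖ ≤ s * (‖A‖ + 1) := by
  have hdecomp : lam⁻¹ • (z - x) - A z = -A (z - x) + lam⁻¹ • p := by
    have hdiff : z - x = lam • A x + p := by
      conv_lhs => rw [hz, penalizedHessian, _root_.add_apply, ContinuousLinearMap.id_apply,
        _root_.smul_apply, add_assoc, add_sub_cancel_left]
    rw [map_sub, hdiff, smul_add, smul_smul, inv_mul_cancel₀ hlam0.ne', one_smul]
    abel
  calc ‖lam⁻¹ • (z - x) - A z‖ ≤ ‖A (z - x)‖ + lam⁻¹ * ‖p‖ := by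
        rw [hdecomp]
        refine (norm_add_le _ _).trans_eq ?_
        rw [norm_neg, norm_smul, norm_inv, Real.norm_of_nonneg hlam0.le]
    _ ≤ ‖A‖ * s + lam⁻¹ * lam ^ 2 := by
        gcongr
        exact (A.le_opNorm _).trans (by gcongr)
    _ ≤ s * (‖A‖ + 1) := by
        rw [pow_two, inv_mul_cancel_left₀ hlam0.ne']
        linarith

theorem exists_supConvolution_second_order [FiniteDimensional ℝ F] (hK : IsCompact K)
    (hne : K.Nonempty) (hu : ContinuousOn u K) {A : F →L[ℝ] F}
    (hsym : ∀ h k, ⟪A h, k⟫ = ⟪h, A k⟫) (hpos : ∀ h, 0 ≤ ⟪A h, h⟫) {η : ℝ} (hη : 0 < η) :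
    ∃ lam > 0, ∃ x, ∃ z ∈ K, (∀ z' ∈ K, u z' - ⟪A z', z'⟫ / 2 ≤ u z - ⟪A z, z⟫ / 2 + η) ∧
      ‖lam⁻¹ • (z - x) - A z‖ ≤ η ∧
      legendre K (supConvKernel lam u) x = ⟪z, x⟫ - supConvKernel lam u z ∧
      HasQuadMajorantAt (legendre K (supConvKernel lam u)) x z (penalizedHessian lam A) ∧
      ∃ B, HasSecondOrderExpansionAt (legendre K (supConvKernel lam u)) x z B := by
  obtain ⟨R, hR⟩ : ∃ R, ∀ z ∈ K, ‖z‖ ≤ R := hK.isBounded.exists_norm_le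
  have hR0 : 0 ≤ R := (norm_nonneg _).trans (hR _ hne.some_mem)
  obtain ⟨s, hs0, hs1, hsη, lam, hlam0, hlams, hlamQ⟩ := exists_supConvolution_parameters
    (show 0 ≤ ‖A‖ * R ^ 2 by positivity) (show 0 < (2 * R + 1) * (‖A‖ + 1) by positivity) hη
  obtain ⟨p, hp, x, z, hz, hzp, hxz, hmaj, hB⟩ := exists_legendre_second_order hK hne
    (continuousOn_supConvKernel hu lam) (penalizedHessian_symm hsym lam)
    (norm_sq_le_inner_penalizedHessian hpos hlam0.le) (pow_pos hlam0 2)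
  have hmax : ∀ z' ∈ K, lam * (u z' - ⟪A z', z'⟫ / 2) + ‖z - x‖ ^ 2 / 2 ≤
      lam * (u z - ⟪A x, x⟫ / 2) + lam ^ 2 * ‖z' - x‖ := fun z' hz' =>
    (supConvolution_max_le hK hu hsym hzp hxz hmaj hz').trans (by
      gcongr; exact (real_inner_le_norm p _).trans (by gcongr))
  have hzx : ‖z - x‖ ≤ s := by
    have hquad : lam * ⟪A z, z⟫ ≤ lam * (‖A‖ * R ^ 2) := by
      gcongr
      exact (inner_apply_self_le A z).trans (by gcongr; exact hR z hz)
    refine le_of_sq_le_sq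
      ((sq_le_of_half_sq_le hlam0.le (hlams.trans hs1) ?_).trans_eq hlamQ) hs0.le
    linarith [hmax z hz, mul_nonneg hlam0.le (hpos x)]
  refine ⟨lam, hlam0, x, z, hz, fun z' hz' => ?_, ?_, hxz, hmaj, hB⟩
  · have hmax' := (le_add_of_nonneg_right (by positivity)).trans (hmax z' hz')
    linarith [sub_quadratic_le_of_penalized_max hsym hlam0 hlams hs1 (hR z hz) (hR z' hz') hzx
      hmax']
  · refine (norm_gradient_sub_le hlam0 hlams hzp hp.le hzx).trans (le_trans ?_ hsη)
    gcongr
    exact le_mul_of_one_le_left (by positivity) (by linarith)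

end SupConvolution

section Doubling

open Filter Topology ContinuousLinearMap

variable {E : Type*} [NormedAddCommGroup E]

/-- The product set `K ×ˢ K` inside the Hilbert space `WithLp 2 (E × E)`. -/
def doubledSet (K : Set E) : Set (WithLp 2 (E × E)) :=
  {ζ | ζ.fst ∈ K ∧ ζ.snd ∈ K}

lemma continuousOn_fst_add_snd {K : Set E} {u v : E → ℝ} (hu : ContinuousOn u K)
    (hv : ContinuousOn v K) :
    ContinuousOn (fun ζ : WithLp 2 (E × E) => u ζ.fst + v ζ.snd) (doubledSet K) :=
  (hu.comp (WithLp.continuous_fst _ _ _).continuousOn fun _ h => h.1).add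
    (hv.comp (WithLp.continuous_snd _ _ _).continuousOn fun _ h => h.2)

lemma supConvKernel_fst_add_snd (lam : ℝ) (u v : E → ℝ) :
    supConvKernel lam (fun ζ : WithLp 2 (E × E) => u ζ.fst + v ζ.snd) =
      fun ζ => supConvKernel lam u ζ.fst + supConvKernel lam v ζ.snd := by
  funext ζ
  rw [supConvKernel, supConvKernel, supConvKernel, WithLp.prod_norm_sq_eq_of_L2]
  ring

variable [InnerProductSpace ℝ E] {F : Type*} [NormedAddCommGroup F] [InnerProductSpace ℝ F]

lemma HasSecondOrderExpansionAt.comp_isometry [CompleteSpace E] [CompleteSpace F] {C : F → ℝ}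
    {D : E → ℝ} {x a : F} {B : F →L[ℝ] F} {y : E} (h : HasSecondOrderExpansionAt C x a B)
    {ι : E →L[ℝ] F} (hι : ∀ k, ‖ι k‖ = ‖k‖) (hD : ∀ k, D (y + k) - D y = C (x + ι k) - C x) :
    HasSecondOrderExpansionAt D y (adjoint ι a) (adjoint ι ∘L B ∘L ι) := by
  intro ε hε
  have hlim : Tendsto ι (𝓝 0) (𝓝 0) := ι.continuous.tendsto' 0 0 (map_zero ι)
  filter_upwards [hlim.eventually (h ε hε)] with k hk
  rw [← hD, hι] at hk
  simpa only [adjoint_inner_left, ContinuousLinearMap.comp_apply] using hk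

lemma HasSecondOrderExpansionAt.tendsto_line {C : F → ℝ} {x a : F} {B : F →L[ℝ] F}
    (h : HasSecondOrderExpansionAt C x a B) (k : F) :
    Tendsto (fun t : ℝ => (C (x + t • k) - C x - t * ⟪a, k⟫) / t ^ 2) (𝓝[≠] 0)
      (𝓝 (⟪B k, k⟫ / 2)) := by
  rw [Metric.tendsto_nhds]
  intro ε hε
  have hline : Tendsto (fun t : ℝ => t • k) (𝓝[≠] 0) (𝓝 0) :=
    ((continuous_id.smul continuous_const).tendsto' 0 0 (zero_smul ℝ k)).mono_left
      nhdsWithin_le_nhds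
  have hε' : 0 < ε / (‖k‖ ^ 2 + 1) := by positivity
  filter_upwards [hline.eventually (h _ hε'), self_mem_nhdsWithin] with t ht ht0
  have ht0 : t ≠ 0 := ht0
  have ht2 : 0 < t ^ 2 := sq_pos_of_ne_zero ht0
  simp only [map_smul, real_inner_smul_left, inner_smul_right, norm_smul, mul_pow,
    Real.norm_eq_abs, sq_abs] at ht
  have hquot : (C (x + t • k) - C x - t * ⟪a, k⟫) / t ^ 2 - ⟪B k, k⟫ / 2 =
      (C (x + t • k) - C x - t * ⟪a, k⟫ - t * (t * ⟪B k, k⟫) / 2) / t ^ 2 := by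
    field_simp
  rw [Real.dist_eq, hquot, abs_div, abs_of_pos ht2, div_lt_iff₀ ht2]
  refine ht.trans_lt ?_
  rw [div_mul_eq_mul_div, div_lt_iff₀ (by positivity)]
  nlinarith

lemma inner_withLp_prod (ζ ξ : WithLp 2 (E × F)) :
    ⟪ζ, ξ⟫ = ⟪ζ.fst, ξ.fst⟫ + ⟪ζ.snd, ξ.snd⟫ :=
  WithLp.prod_inner_apply ζ ξ

lemma HasSecondOrderExpansionAt.exists_fst [CompleteSpace E] [CompleteSpace F] {C₁ : E → ℝ}
    {C₂ : F → ℝ} {x a : WithLp 2 (E × F)} {B : WithLp 2 (E × F) →L[ℝ] WithLp 2 (E × F)}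
    (h : HasSecondOrderExpansionAt (fun ζ : WithLp 2 (E × F) => C₁ ζ.fst + C₂ ζ.snd) x a B) :
    ∃ B₁, HasSecondOrderExpansionAt C₁ x.fst a.fst B₁ := by
  let ι : E →L[ℝ] WithLp 2 (E × F) :=
    (WithLp.prodContinuousLinearEquiv 2 ℝ E F).symm.toContinuousLinearMap ∘L .inl ℝ E F
  have hfst : adjoint ι a = a.fst := by
    refine ext_inner_right ℝ fun k => ?_
    rw [adjoint_inner_left, inner_withLp_prod]
    exact add_eq_left.mpr (inner_zero_right _)
  rw [← hfst]
  refine ⟨_, h.comp_isometry (WithLp.norm_toLp_fst 2 E F) fun k => ?_⟩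
  change _ = C₁ (x.fst + k) + C₂ (x.snd + 0) - (C₁ x.fst + C₂ x.snd)
  rw [add_zero, add_sub_add_right_eq_sub]

lemma HasSecondOrderExpansionAt.exists_snd [CompleteSpace E] [CompleteSpace F] {C₁ : E → ℝ}
    {C₂ : F → ℝ} {x a : WithLp 2 (E × F)} {B : WithLp 2 (E × F) →L[ℝ] WithLp 2 (E × F)}
    (h : HasSecondOrderExpansionAt (fun ζ : WithLp 2 (E × F) => C₁ ζ.fst + C₂ ζ.snd) x a B) :
    ∃ B₂, HasSecondOrderExpansionAt C₂ x.snd a.snd B₂ := by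
  let ι : F →L[ℝ] WithLp 2 (E × F) :=
    (WithLp.prodContinuousLinearEquiv 2 ℝ E F).symm.toContinuousLinearMap ∘L .inr ℝ E F
  have hsnd : adjoint ι a = a.snd := by
    refine ext_inner_right ℝ fun k => ?_
    rw [adjoint_inner_left, inner_withLp_prod]
    exact add_eq_right.mpr (inner_zero_right _)
  rw [← hsnd]
  refine ⟨_, h.comp_isometry (WithLp.norm_toLp_snd 2 E F) fun k => ?_⟩
  change _ = C₁ (x.fst + 0) + C₂ (x.snd + k) - (C₁ x.fst + C₂ x.snd)
  rw [add_zero, add_sub_add_left_eq_sub]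

lemma inner_add_inner_le_of_quadMajorant {C₁ : E → ℝ} {C₂ : F → ℝ} {x a : WithLp 2 (E × F)}
    {B₁ : E →L[ℝ] E} {B₂ : F →L[ℝ] F} {L : WithLp 2 (E × F) →L[ℝ] WithLp 2 (E × F)}
    (h₁ : HasSecondOrderExpansionAt C₁ x.fst a.fst B₁)
    (h₂ : HasSecondOrderExpansionAt C₂ x.snd a.snd B₂)
    (hL : HasQuadMajorantAt (fun ζ : WithLp 2 (E × F) => C₁ ζ.fst + C₂ ζ.snd) x a L)
    (ζ : WithLp 2 (E × F)) :
    ⟪B₁ ζ.fst, ζ.fst⟫ + ⟪B₂ ζ.snd, ζ.snd⟫ ≤ ⟪L ζ, ζ⟫ := by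
  have hlim := (h₁.tendsto_line ζ.fst).add (h₂.tendsto_line ζ.snd)
  suffices h : ⟪B₁ ζ.fst, ζ.fst⟫ / 2 + ⟪B₂ ζ.snd, ζ.snd⟫ / 2 ≤ ⟪L ζ, ζ⟫ / 2 by linarith
  refine le_of_tendsto hlim ?_
  filter_upwards [self_mem_nhdsWithin] with t ht
  have hmaj : C₁ (x.fst + t • ζ.fst) + C₂ (x.snd + t • ζ.snd) ≤
      C₁ x.fst + C₂ x.snd + ⟪a, t • ζ⟫ + ⟪L (t • ζ), t • ζ⟫ / 2 := hL (t • ζ)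
  rw [map_smul, inner_smul_right, real_inner_smul_left, inner_smul_right,
    inner_withLp_prod] at hmaj
  rw [← add_div, div_le_iff₀ (sq_pos_of_ne_zero ht)]
  linarith

/-- The operator of the quadratic form `(z, w) ↦ ⟪A (z - w), z - w⟫` on `E × E`. -/
def doublingOperator (A : E →L[ℝ] E) : WithLp 2 (E × E) →L[ℝ] WithLp 2 (E × E) :=
  (WithLp.prodContinuousLinearEquiv 2 ℝ E E).symm.toContinuousLinearMap ∘L
    (A.prod (-A)) ∘L (WithLp.fstL 2 ℝ E E - WithLp.sndL 2 ℝ E E)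

lemma doublingOperator_apply (A : E →L[ℝ] E) (ζ : WithLp 2 (E × E)) :
    doublingOperator A ζ = WithLp.toLp 2 (A (ζ.fst - ζ.snd), -A (ζ.fst - ζ.snd)) := rfl

lemma inner_doublingOperator (A : E →L[ℝ] E) (ζ ξ : WithLp 2 (E × E)) :
    ⟪doublingOperator A ζ, ξ⟫ = ⟪A (ζ.fst - ζ.snd), ξ.fst - ξ.snd⟫ := by
  rw [doublingOperator_apply, WithLp.prod_inner_apply, inner_sub_right, inner_neg_left]
  rfl

lemma doublingOperator_symm {A : E →L[ℝ] E} (hsym : ∀ h k, ⟪A h, k⟫ = ⟪h, A k⟫)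
    (ζ ξ : WithLp 2 (E × E)) : ⟪doublingOperator A ζ, ξ⟫ = ⟪ζ, doublingOperator A ξ⟫ := by
  rw [inner_doublingOperator, real_inner_comm (doublingOperator A ξ), inner_doublingOperator, hsym,
    real_inner_comm]

lemma isCompact_doubledSet {K : Set E} (hK : IsCompact K) : IsCompact (doubledSet K) :=
  (WithLp.prodContinuousLinearEquiv 2 ℝ E E).toHomeomorph.isCompact_preimage.mpr (hK.prod hK)

lemma legendre_doubledSet {K : Set E} (hK : IsCompact K) (hne : K.Nonempty) {g₁ g₂ : E → ℝ}
    (hg₁ : ContinuousOn g₁ K) (hg₂ : ContinuousOn g₂ K) (ζ : WithLp 2 (E × E)) :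
    legendre (doubledSet K) (fun ξ => g₁ ξ.fst + g₂ ξ.snd) ζ =
      legendre K g₁ ζ.fst + legendre K g₂ ζ.snd := by
  have hg := continuousOn_fst_add_snd hg₁ hg₂
  obtain ⟨z, hz, hζz⟩ := exists_legendre_eq hK hne hg₁ ζ.fst
  obtain ⟨w, hw, hζw⟩ := exists_legendre_eq hK hne hg₂ ζ.snd
  have hmem : WithLp.toLp 2 (z, w) ∈ doubledSet K := ⟨hz, hw⟩
  obtain ⟨ξ, hξ, hζξ⟩ := exists_legendre_eq (isCompact_doubledSet hK) ⟨_, hmem⟩ hg ζ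
  apply le_antisymm
  · rw [hζξ, inner_withLp_prod]
    linarith [le_legendre hK hg₁ ζ.fst hξ.1, le_legendre hK hg₂ ζ.snd hξ.2]
  · have hle := le_legendre (isCompact_doubledSet hK) hg ζ hmem
    rw [inner_withLp_prod] at hle
    simp only [WithLp.toLp_fst, WithLp.toLp_snd] at hle
    linarith

lemma legendre_eq_and_eq_of_add {K : Set E} (hK : IsCompact K) {g₁ g₂ : E → ℝ}
    (hg₁ : ContinuousOn g₁ K) (hg₂ : ContinuousOn g₂ K) {x y z w : E} (hz : z ∈ K) (hw : w ∈ K)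
    (h : legendre K g₁ x + legendre K g₂ y = ⟪z, x⟫ + ⟪w, y⟫ - (g₁ z + g₂ w)) :
    legendre K g₁ x = ⟪z, x⟫ - g₁ z ∧ legendre K g₂ y = ⟪w, y⟫ - g₂ w := by
  have h₁ := le_legendre hK hg₁ x hz
  have h₂ := le_legendre hK hg₂ y hw
  constructor <;> linarith

/-- A form of the Crandall–Ishii theorem on sums, at approximate rather than exact maxima. -/
theorem exists_doubling_jets [FiniteDimensional ℝ E] {K : Set E} (hK : IsCompact K)
    (hne : K.Nonempty) {u v : E → ℝ} (hu : ContinuousOn u K) (hv : ContinuousOn v K)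
    {A : E →L[ℝ] E} (hsym : ∀ h k, ⟪A h, k⟫ = ⟪h, A k⟫) (hpos : ∀ h, 0 ≤ ⟪A h, h⟫)
    {η : ℝ} (hη : 0 < η) :
    ∃ z ∈ K, ∃ w ∈ K, ∃ a₁ a₂ : E, ∃ B₁ B₂ : E →L[ℝ] E,
      (∀ z' ∈ K, ∀ w' ∈ K, u z' + v w' - ⟪A (z' - w'), z' - w'⟫ / 2 ≤
        u z + v w - ⟪A (z - w), z - w⟫ / 2 + η) ∧
      HasUpperJet K u z a₁ B₁ ∧ HasUpperJet K v w a₂ B₂ ∧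
      ‖a₁ - A (z - w)‖ ≤ η ∧ ‖a₂ + A (z - w)‖ ≤ η ∧
      ∀ h k, ⟪B₁ h, h⟫ + ⟪B₂ k, k⟫ ≤ ⟪A (h - k), h - k⟫ := by
  have huv : ContinuousOn (fun ζ : WithLp 2 (E × E) => u ζ.fst + v ζ.snd) (doubledSet K) :=
    continuousOn_fst_add_snd hu hv
  obtain ⟨z₀, hz₀⟩ := hne
  obtain ⟨lam, hlam, x, ζ, hζ, hmax, hgrad, hxζ, hmaj, B, hB⟩ :=
    exists_supConvolution_second_order (isCompact_doubledSet hK)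
      (⟨WithLp.toLp 2 (z₀, z₀), hz₀, hz₀⟩ : (doubledSet K).Nonempty) huv
      (doublingOperator_symm hsym) (fun ζ => (inner_doublingOperator A ζ ζ).symm ▸ hpos _) hη
  have hku := continuousOn_supConvKernel hu lam
  have hkv := continuousOn_supConvKernel hv lam
  have hsum := funext (legendre_doubledSet hK ⟨z₀, hz₀⟩ hku hkv)
  rw [supConvKernel_fst_add_snd, hsum] at hxζ hmaj hB
  rw [inner_withLp_prod] at hxζ
  obtain ⟨hu', hv'⟩ := legendre_eq_and_eq_of_add hK hku hkv hζ.1 hζ.2 hxζ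
  obtain ⟨B₁, hB₁⟩ := hB.exists_fst
  obtain ⟨B₂, hB₂⟩ := hB.exists_snd
  refine ⟨ζ.fst, hζ.1, ζ.snd, hζ.2, _, _, _, _, fun z' hz' w' hw' => ?_,
    hB₁.hasUpperJet hK hu hlam hu', hB₂.hasUpperJet hK hv hlam hv',
    (WithLp.norm_fst_le _ _).trans hgrad, ?_, fun h k => ?_⟩
  · have hle := hmax (WithLp.toLp 2 (z', w')) ⟨hz', hw'⟩
    rwa [inner_doublingOperator, inner_doublingOperator] at hle
  · have hsnd := (WithLp.norm_snd_le _ _).trans hgrad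
    rw [WithLp.sub_snd, doublingOperator_apply] at hsnd
    exact (congrArg norm (sub_neg_eq_add _ _)).symm.trans_le hsnd
  · have hle : ⟪B₁ h, h⟫ + ⟪B₂ k, k⟫ ≤ ⟪h, h⟫ + ⟪k, k⟫ + lam * ⟪A (h - k), h - k⟫ := by
      have hle := inner_add_inner_le_of_quadMajorant hB₁ hB₂ hmaj (WithLp.toLp 2 (h, k))
      rwa [inner_penalizedHessian, inner_doublingOperator, inner_withLp_prod (WithLp.toLp 2 _)]
        at hle
    simp only [_root_.smul_apply, _root_.sub_apply, ContinuousLinearMap.id_apply,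
      real_inner_smul_left, inner_sub_left]
    rw [← mul_add, inv_mul_le_iff₀ hlam]
    linarith

end Doubling

section TestFunctions

open Filter Topology

lemma exists_contDiff_hasCompactSupport_eventuallyEq {E : Type*} [NormedAddCommGroup E]
    [NormedSpace ℝ E] [FiniteDimensional ℝ E] {φ : E → ℝ} {x : E} {m : ℕ}
    (h : ContDiffAt ℝ m φ x) :
    ∃ ψ : E → ℝ, ContDiff ℝ m ψ ∧ HasCompactSupport ψ ∧ ψ =ᶠ[𝓝 x] φ := by
  obtain ⟨r, hr, hball⟩ := Metric.eventually_nhds_iff_ball.mp (h.eventually (by simp))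
  let β : ContDiffBump x := ⟨r / 3, r / 2, by positivity, by linarith⟩
  have hsupp : tsupport (fun y => β y * φ y) ⊆ Metric.ball x r :=
    (tsupport_mul_subset_left (f := β)).trans (β.tsupport_eq.trans_subset
      (Metric.closedBall_subset_ball (half_lt_self hr)))
  have hsmooth : ContDiff ℝ m fun y => β y * φ y := contMDiff_iff_contDiff.mp <|
    contMDiff_of_tsupport fun y hy => (β.contDiffAt.mul (hball y (hsupp hy))).contMDiffAt
  refine ⟨fun y => β y * φ y, hsmooth, β.hasCompactSupport.mul_right, ?_⟩
  filter_upwards [β.eventuallyEq_one] with y hy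
  rw [hy, Pi.one_apply, one_mul]

variable {n : ℕ} {φ ψ : ℝ → Eucl n → ℝ} {t : ℝ} {x : Eucl n}

lemma spaceHess_congr (h : ψ t =ᶠ[𝓝 x] φ t) : spaceHess ψ t x = spaceHess φ t x := by
  ext i j
  have hj := (h.fderiv (𝕜 := ℝ)).fun_comp
    fun L : Eucl n →L[ℝ] ℝ => L (EuclideanSpace.single j (1 : ℝ))
  exact congrArg (fun L : Eucl n →L[ℝ] ℝ => L (EuclideanSpace.single i (1 : ℝ)))
    (hj.fderiv_eq (𝕜 := ℝ))

lemma spaceGrad_congr (h : ψ t =ᶠ[𝓝 x] φ t) : spaceGrad ψ t x = spaceGrad φ t x :=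
  congrArg _ h.fderiv_eq

lemma spaceHess_neg : spaceHess (fun t x => -φ t x) t x = -spaceHess φ t x := by
  ext i j
  simp [spaceHess, fderiv_fun_neg]

lemma spaceGrad_neg : spaceGrad (fun t x => -φ t x) t x = -spaceGrad φ t x := by
  simp only [spaceGrad, gradient, fderiv_fun_neg, map_neg]

lemma IsTestFunction.neg (h : IsTestFunction φ) : IsTestFunction fun t x => -φ t x := by
  refine ⟨h.1.neg, fun i hi hi' => (h.2 i hi hi').imp fun M hM p => ?_⟩
  have hneg : iteratedFDeriv ℝ i (fun q : ℝ × Eucl n => -φ q.1 q.2) p =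
      -iteratedFDeriv ℝ i (fun q : ℝ × Eucl n => φ q.1 q.2) p := iteratedFDeriv_neg_apply
  exact (congrArg norm hneg).trans_le ((norm_neg _).trans_le (hM p))

/-- The matrix of a linear operator, in the index convention of `spaceHess`. -/
def opMatrix (L : Eucl n →L[ℝ] Eucl n) : Matrix (Fin n) (Fin n) ℝ :=
  Matrix.of fun i j => (L (EuclideanSpace.single i 1)) j

lemma spaceHess_eq_opMatrix {D : Eucl n → Eucl n}
    (hD : ∀ᶠ y in 𝓝 x, HasGradientAt (φ t) (D y) y) {L : Eucl n →L[ℝ] Eucl n}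
    (hL : HasFDerivAt D L x) : spaceHess φ t x = opMatrix L := by
  ext i j
  have hfderiv : (fun y => fderiv ℝ (fun y' => φ t y') y (EuclideanSpace.single j (1 : ℝ)))
      =ᶠ[𝓝 x] fun y => ⟪D y, EuclideanSpace.single j (1 : ℝ)⟫ :=
    hD.mono fun y hy => congrArg (· (EuclideanSpace.single j 1)) hy.hasFDerivAt.fderiv
  simp only [spaceHess, opMatrix, Matrix.of_apply]
  rw [hfderiv.fderiv_eq, (hL.inner ℝ (hasFDerivAt_const _ x)).fderiv]
  simp [PiLp.inner_apply]

variable {T : ℝ} {G : ℝ → Eucl n → ℝ → Eucl n → Matrix (Fin n) (Fin n) ℝ → ℝ}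
  {g : Eucl n → ℝ} {w : ℝ → Eucl n → ℝ}

lemma IsViscositySubsolution.le_of_contDiffAt (h : IsViscositySubsolution T G g w)
    (ht : t ∈ Set.Ico 0 T) (hφ : ContDiffAt ℝ 3 (fun p : ℝ × Eucl n => φ p.1 p.2) (t, x))
    (hmax : IsLocalMax (fun p : ℝ × Eucl n => w p.1 p.2 - φ p.1 p.2) (t, x)) :
    0 ≤ timeDeriv φ t x + G t x (φ t x) (spaceGrad φ t x) (spaceHess φ t x) := by
  obtain ⟨ψ, hψ, hcs, heq⟩ := exists_contDiff_hasCompactSupport_eventuallyEq (m := 3) hφ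
  have hspace : (fun y => ψ (t, y)) =ᶠ[𝓝 x] φ t :=
    (Continuous.tendsto' (f := fun y => (t, y)) (by fun_prop) x _ rfl).eventually heq
  have htime : (fun s => ψ (s, x)) =ᶠ[𝓝 t] fun s => φ s x :=
    (Continuous.tendsto' (f := fun s => (s, x)) (by fun_prop) t _ rfl).eventually heq
  have htest : IsTestFunction fun t x => ψ (t, x) :=
    ⟨hψ, fun i _ hi => (hcs.iteratedFDeriv (𝕜 := ℝ) i).exists_bound_of_continuous
      (hψ.continuous_iteratedFDeriv (by exact_mod_cast hi))⟩
  have hmax' : IsLocalMax (fun p : ℝ × Eucl n => w p.1 p.2 - ψ p) (t, x) :=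
    hmax.congr (heq.mono fun p hp => congrArg (w p.1 p.2 - ·) hp.symm)
  have hle := h.2 _ htest t ht x (hmax'.on _)
  rwa [show timeDeriv (fun t x => ψ (t, x)) t x = timeDeriv φ t x from htime.deriv_eq,
    spaceGrad_congr hspace, spaceHess_congr hspace, heq.eq_of_nhds] at hle

lemma IsViscositySubsolution.le_of_hasGradientAt (h : IsViscositySubsolution T G g w)
    (ht : t ∈ Set.Ico 0 T) (hφ : ContDiffAt ℝ 3 (fun p : ℝ × Eucl n => φ p.1 p.2) (t, x))
    (hmax : IsLocalMax (fun p : ℝ × Eucl n => w p.1 p.2 - φ p.1 p.2) (t, x))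
    {τ : ℝ} (hτ : HasDerivAt (fun s => φ s x) τ t) {D : Eucl n → Eucl n}
    (hD : ∀ᶠ y in 𝓝 x, HasGradientAt (φ t) (D y) y) {L : Eucl n →L[ℝ] Eucl n}
    (hL : HasFDerivAt D L x) :
    0 ≤ τ + G t x (φ t x) (D x) (opMatrix L) := by
  have hle := h.le_of_contDiffAt ht hφ hmax
  rwa [show timeDeriv φ t x = τ from hτ.deriv,
    show spaceGrad φ t x = D x from hD.self_of_nhds.gradient, spaceHess_eq_opMatrix hD hL] at hle

lemma IsViscositySupersolution.neg (h : IsViscositySupersolution T G g w) :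
    IsViscositySubsolution T (fun t x y p X => -G t x (-y) (-p) (-X)) (fun x => -g x)
      (fun t x => -w t x) := by
  refine ⟨fun x => neg_le_neg (h.1 x), fun φ hφ t ht x hmax => ?_⟩
  have hmin : IsLocalMinOn (fun p : ℝ × Eucl n => w p.1 p.2 - -φ p.1 p.2)
      (Set.Icc 0 T ×ˢ Set.univ) (t, x) := by
    filter_upwards [hmax] with p hp
    linarith
  have hle := h.2 (fun t x => -φ t x) hφ.neg t ht x hmin
  rw [show timeDeriv (fun t x => -φ t x) t x = -timeDeriv φ t x from deriv.fun_neg,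
    spaceGrad_neg, spaceHess_neg] at hle
  linarith

end TestFunctions

section JetTest

open Filter Topology

section Quadratic

variable {E : Type*} [NormedAddCommGroup E] [InnerProductSpace ℝ E]

/-- The second-order Taylor polynomial with gradient `a` and Hessian `S` at the origin. -/
def jetPoly (a : E) (S : E →L[ℝ] E) (k : E) : ℝ :=
  ⟪a, k⟫ + ⟪S k, k⟫ / 2

lemma jetPoly_zero (a : E) (S : E →L[ℝ] E) : jetPoly a S 0 = 0 := by
  simp [jetPoly]

lemma contDiff_jetPoly (a : E) (S : E →L[ℝ] E) {m : WithTop ℕ∞} : ContDiff ℝ m (jetPoly a S) :=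
  (contDiff_const.inner ℝ contDiff_id).add ((S.contDiff.inner ℝ contDiff_id).div_const 2)

lemma hasGradientAt_jetPoly [CompleteSpace E] {S : E →L[ℝ] E} (hS : ∀ h k, ⟪S h, k⟫ = ⟪h, S k⟫)
    (a k : E) : HasGradientAt (jetPoly a S) (a + S k) k := by
  have hlin : HasFDerivAt (fun k : E => ⟪a, k⟫) (innerSL ℝ a) k := (innerSL ℝ a).hasFDerivAt
  have hquad := ((S.hasFDerivAt (x := k)).inner ℝ (hasFDerivAt_id k)).mul_const (2⁻¹ : ℝ)
  refine (hlin.add hquad).congr_fderiv ?_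
  ext h
  simp only [_root_.add_apply, _root_.smul_apply, InnerProductSpace.toDual_apply_apply,
    innerSL_apply_apply, inner_add_left, ContinuousLinearMap.comp_apply,
    ContinuousLinearMap.prod_apply, fderivInnerCLM_apply, ContinuousLinearMap.id_apply, id_eq,
    hS h k, real_inner_comm (S k) h, smul_eq_mul]
  ring

lemma exists_symmetric_operator [CompleteSpace E] (B : E →L[ℝ] E) (c : ℝ) :
    ∃ S : E →L[ℝ] E, (∀ h k, ⟪S h, k⟫ = ⟪h, S k⟫) ∧ ∀ h, ⟪S h, h⟫ = ⟪B h, h⟫ + c * ‖h‖ ^ 2 := by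
  refine ⟨(1 / 2 : ℝ) • (B + ContinuousLinearMap.adjoint B) + c • ContinuousLinearMap.id ℝ E,
    fun h k => ?_, fun h => ?_⟩
  · simp only [_root_.add_apply, _root_.smul_apply, ContinuousLinearMap.id_apply, inner_add_left,
      inner_add_right, real_inner_smul_left, inner_smul_right,
      ContinuousLinearMap.adjoint_inner_left, ContinuousLinearMap.adjoint_inner_right]
    ring
  · simp only [_root_.add_apply, _root_.smul_apply, ContinuousLinearMap.id_apply, inner_add_left,
      real_inner_smul_left, ContinuousLinearMap.adjoint_inner_left, real_inner_self_eq_norm_sq,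
      real_inner_comm (B h) h]
    ring

end Quadratic

section TimeSpace

variable {E : Type*} [NormedAddCommGroup E] [InnerProductSpace ℝ E]

/-- The inclusion of the space variable into time-space. -/
def spaceIncl : E →L[ℝ] WithLp 2 (ℝ × E) :=
  ((WithLp.prodContinuousLinearEquiv 2 ℝ ℝ E).symm : (ℝ × E) →L[ℝ] WithLp 2 (ℝ × E)) ∘L
    ContinuousLinearMap.inr ℝ ℝ E

lemma inner_spaceIncl (ζ : WithLp 2 (ℝ × E)) (h : E) : ⟪ζ, spaceIncl h⟫ = ⟪ζ.snd, h⟫ := by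
  rw [inner_withLp_prod]
  exact (congrArg (· + _) (inner_zero_right _)).trans (zero_add _)

lemma norm_spaceIncl (h : E) : ‖(spaceIncl h : WithLp 2 (ℝ × E))‖ = ‖h‖ := by
  rw [norm_eq_sqrt_real_inner, inner_spaceIncl, norm_eq_sqrt_real_inner]
  rfl

/-- The space-space block of an operator on time-space. -/
def spaceBlock (S : WithLp 2 (ℝ × E) →L[ℝ] WithLp 2 (ℝ × E)) : E →L[ℝ] E :=
  WithLp.sndL 2 ℝ ℝ E ∘L S ∘L spaceIncl

lemma hasFDerivAt_toLp_sub_space (z : WithLp 2 (ℝ × E)) (t : ℝ) (y : E) :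
    HasFDerivAt (fun y : E => WithLp.toLp 2 (t, y) - z) spaceIncl y :=
  ((WithLp.prodContinuousLinearEquiv 2 ℝ ℝ E).symm.hasFDerivAt.comp y
    ((hasFDerivAt_const t y).prodMk (hasFDerivAt_id y))).sub_const z

lemma hasDerivAt_toLp_sub_time (z : WithLp 2 (ℝ × E)) (t : ℝ) (y : E) :
    HasDerivAt (fun s : ℝ => WithLp.toLp 2 (s, y) - z) (WithLp.toLp 2 (1, 0)) t :=
  ((WithLp.prodContinuousLinearEquiv 2 ℝ ℝ E).symm.hasFDerivAt.comp_hasDerivAt t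
    ((hasDerivAt_id t).prodMk (hasDerivAt_const t y))).sub_const z

variable {S : WithLp 2 (ℝ × E) →L[ℝ] WithLp 2 (ℝ × E)}

lemma hasFDerivAt_jetPoly_space_gradient (a z : WithLp 2 (ℝ × E)) (y : E) :
    HasFDerivAt (fun y => (a + S (WithLp.toLp 2 (z.fst, y) - z)).snd) (spaceBlock S) y :=
  (WithLp.sndL 2 ℝ ℝ E).hasFDerivAt.comp y
    ((S.hasFDerivAt.comp y (hasFDerivAt_toLp_sub_space z z.fst y)).const_add a)

variable [CompleteSpace E]

lemma hasDerivAt_jetPoly_time (hS : ∀ h k, ⟪S h, k⟫ = ⟪h, S k⟫) (a z : WithLp 2 (ℝ × E)) :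
    HasDerivAt (fun s => jetPoly a S (WithLp.toLp 2 (s, z.snd) - z)) a.fst z.fst := by
  have hcomp := (hasGradientAt_jetPoly hS a _).hasFDerivAt.comp_hasDerivAt z.fst
    (hasDerivAt_toLp_sub_time z z.fst z.snd)
  refine hcomp.congr_deriv ?_
  rw [show WithLp.toLp 2 (z.fst, z.snd) = z from rfl, sub_self, map_zero, add_zero,
    InnerProductSpace.toDual_apply_apply, inner_withLp_prod]
  simp

lemma hasGradientAt_jetPoly_space (hS : ∀ h k, ⟪S h, k⟫ = ⟪h, S k⟫) (a z : WithLp 2 (ℝ × E))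
    (y : E) : HasGradientAt (fun y => jetPoly a S (WithLp.toLp 2 (z.fst, y) - z))
      (a + S (WithLp.toLp 2 (z.fst, y) - z)).snd y := by
  refine ((hasGradientAt_jetPoly hS a _).hasFDerivAt.comp y
    (hasFDerivAt_toLp_sub_space z z.fst y)).congr_fderiv ?_
  ext h
  exact inner_spaceIncl _ h

end TimeSpace

variable {n : ℕ} {T : ℝ} {G : ℝ → Eucl n → ℝ → Eucl n → Matrix (Fin n) (Fin n) ℝ → ℝ}
  {g : Eucl n → ℝ} {w : ℝ → Eucl n → ℝ}

lemma HasUpperJet.isLocalMax_sub_jetPoly {E : Type*} [NormedAddCommGroup E] [InnerProductSpace ℝ E]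
    {K : Set E} {u : E → ℝ} {z a : E} (hK : K ∈ 𝓝 z) {B S : E →L[ℝ] E} (hB : HasUpperJet K u z a B)
    {ε : ℝ} (hε : 0 < ε) (hS : ∀ h, ⟪S h, h⟫ = ⟪B h, h⟫ + ε * ‖h‖ ^ 2) :
    IsLocalMax (fun ζ => u ζ - jetPoly a S (ζ - z)) z := by
  have hsub : Tendsto (fun ζ => ζ - z) (𝓝 z) (𝓝 0) :=
    Continuous.tendsto' (by fun_prop) _ _ (sub_self z)
  filter_upwards [hsub.eventually (hB (ε / 2) (by positivity)), hK] with ζ hζ hζK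
  rw [add_sub_cancel] at hζ
  rw [sub_self, jetPoly_zero, jetPoly, hS]
  linarith [hζ hζK]

lemma IsViscositySubsolution.exists_le_of_hasUpperJet (h : IsViscositySubsolution T G g w)
    {χ : ℝ → Eucl n → ℝ} {z a : WithLp 2 (ℝ × Eucl n)} (ht : z.fst ∈ Set.Ico 0 T)
    (hχ : ContDiffAt ℝ 3 (fun p : ℝ × Eucl n => χ p.1 p.2) (z.fst, z.snd))
    {τ : ℝ} (hτ : HasDerivAt (fun s => χ s z.snd) τ z.fst) {D : Eucl n → Eucl n}
    (hD : ∀ y, HasGradientAt (χ z.fst) (D y) y) {M : Eucl n →L[ℝ] Eucl n}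
    (hM : HasFDerivAt D M z.snd) {K : Set (WithLp 2 (ℝ × Eucl n))} (hK : K ∈ 𝓝 z)
    {B : WithLp 2 (ℝ × Eucl n) →L[ℝ] WithLp 2 (ℝ × Eucl n)}
    (hB : HasUpperJet K (fun z => w z.fst z.snd - χ z.fst z.snd) z a B) {ε : ℝ} (hε : 0 < ε) :
    ∃ N : Eucl n →L[ℝ] Eucl n,
      (∀ h, ⟪N h, h⟫ = ⟪B (WithLp.toLp 2 (0, h)), WithLp.toLp 2 (0, h)⟫ + ε * ‖h‖ ^ 2) ∧
      0 ≤ τ + a.fst + G z.fst z.snd 0 (D z.snd + a.snd) (opMatrix (M + N)) := by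
  obtain ⟨S, hS, hSB⟩ := exists_symmetric_operator B ε
  refine ⟨spaceBlock S, fun h => ?_, ?_⟩
  · rw [← norm_spaceIncl h]
    exact (inner_spaceIncl (S (spaceIncl h)) h).symm.trans (hSB (spaceIncl h))
  let φ : ℝ → Eucl n → ℝ := fun t x =>
    χ t x - χ z.fst z.snd + jetPoly a S (WithLp.toLp 2 (t, x) - z)
  have hz : WithLp.toLp 2 (z.fst, z.snd) = z := rfl
  have htoLp : ContDiff ℝ 3 fun p : ℝ × Eucl n => WithLp.toLp 2 p - z :=
    (WithLp.prodContinuousLinearEquiv 2 ℝ ℝ (Eucl n)).symm.contDiff.sub contDiff_const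
  have hφ : ContDiffAt ℝ 3 (fun p : ℝ × Eucl n => φ p.1 p.2) (z.fst, z.snd) :=
    (hχ.sub contDiffAt_const).add ((contDiff_jetPoly a S).comp htoLp).contDiffAt
  have hmax : IsLocalMax (fun p : ℝ × Eucl n => w p.1 p.2 - φ p.1 p.2) (z.fst, z.snd) := by
    have hjet := hB.isLocalMax_sub_jetPoly hK hε hSB
    have htend : Tendsto (WithLp.toLp 2) (𝓝 (z.fst, z.snd)) (𝓝 z) :=
      (WithLp.prod_continuous_toLp 2 ℝ (Eucl n)).tendsto' _ _ rfl
    filter_upwards [htend.eventually hjet] with p hp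
    change w p.1 p.2 - χ p.1 p.2 - _ ≤ _ at hp
    simp only [φ, hz, sub_self, jetPoly_zero, Prod.mk.eta] at hp ⊢
    linarith
  have hle := h.le_of_hasGradientAt ht hφ hmax
    ((hτ.sub_const _).add (hasDerivAt_jetPoly_time hS a z))
    (Eventually.of_forall fun y => ((hD y).hasFDerivAt.sub_const _).add
      (hasGradientAt_jetPoly_space hS a z y).hasFDerivAt |>.congr_fderiv (map_add _ _ _).symm)
    (hM.add (hasFDerivAt_jetPoly_space_gradient a z z.snd))
  simpa only [φ, hz, sub_self, jetPoly_zero, map_zero, add_zero] using hle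

end JetTest

section MatrixColumns

variable {n d : ℕ}

/-- The `k`-th column of a matrix as a Euclidean vector. -/
def colVec (M : Matrix (Fin n) (Fin d) ℝ) (k : Fin d) : Eucl n :=
  WithLp.toLp 2 fun i => M i k

lemma colVec_sub (M M' : Matrix (Fin n) (Fin d) ℝ) (k : Fin d) :
    colVec (M - M') k = colVec M k - colVec M' k := rfl

lemma frobenius_norm_sq (M : Matrix (Fin n) (Fin d) ℝ) : ‖M‖ ^ 2 = ∑ i, ∑ k, M i k ^ 2 := by
  rw [Matrix.frobenius_norm_def, ← Real.sqrt_eq_rpow, Real.sq_sqrt (by positivity)]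
  simp

lemma sum_norm_colVec_sq (M : Matrix (Fin n) (Fin d) ℝ) : ∑ k, ‖colVec M k‖ ^ 2 = ‖M‖ ^ 2 := by
  rw [frobenius_norm_sq, Finset.sum_comm]
  simp [EuclideanSpace.norm_sq_eq, colVec]

lemma trace_mul_opMatrix (M : Matrix (Fin n) (Fin d) ℝ) (L : Eucl n →L[ℝ] Eucl n) :
    Matrix.trace (M * Mᵀ * opMatrix L) = ∑ k, ⟪L (colVec M k), colVec M k⟫ := by
  have hcol : ∀ k, colVec M k = ∑ i, M i k • EuclideanSpace.single i (1 : ℝ) := by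
    intro k
    ext j
    simp [colVec, Finset.sum_apply, Pi.single_apply]
  have hL : ∀ k, ⟪L (colVec M k), colVec M k⟫ = ∑ j, M j k * ∑ i, M i k * opMatrix L i j := by
    intro k
    rw [PiLp.inner_apply]
    refine Finset.sum_congr rfl fun j _ => ?_
    have : L (colVec M k) j = ∑ i, M i k * opMatrix L i j := by
      rw [hcol, map_sum]
      simp [opMatrix]
    rw [this]
    simp [colVec]
  simp only [hL, Matrix.trace, Matrix.diag_apply, Matrix.mul_apply, Matrix.transpose_apply,
    Finset.sum_mul, Finset.mul_sum]
  rw [Finset.sum_congr rfl fun j _ => Finset.sum_comm, Finset.sum_comm]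
  refine Finset.sum_congr rfl fun k _ => Finset.sum_congr rfl fun j _ =>
    Finset.sum_congr rfl fun i _ => by ring

lemma rowMul_apply (p : Eucl n) (M : Matrix (Fin n) (Fin d) ℝ) (k : Fin d) :
    rowMul p M k = ⟪p, colVec M k⟫ := by
  simp [rowMul, colVec, PiLp.inner_apply, mul_comm]

lemma rowMul_add_left (p q : Eucl n) (M : Matrix (Fin n) (Fin d) ℝ) :
    rowMul (p + q) M = rowMul p M + rowMul q M := by
  ext k
  simp [rowMul_apply, inner_add_left]

lemma rowMul_smul_left (a : ℝ) (p : Eucl n) (M : Matrix (Fin n) (Fin d) ℝ) :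
    rowMul (a • p) M = a • rowMul p M := by
  ext k
  simp [rowMul_apply, real_inner_smul_left]

lemma rowMul_sub_right (p : Eucl n) (M M' : Matrix (Fin n) (Fin d) ℝ) :
    rowMul p (M - M') = rowMul p M - rowMul p M' := by
  ext k
  simp [rowMul_apply, colVec_sub, inner_sub_right]

lemma norm_rowMul_le (p : Eucl n) (M : Matrix (Fin n) (Fin d) ℝ) : ‖rowMul p M‖ ≤ ‖p‖ * ‖M‖ := by
  apply le_of_sq_le_sq _ (by positivity)
  rw [mul_pow, ← sum_norm_colVec_sq, EuclideanSpace.norm_sq_eq, Finset.mul_sum]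
  refine Finset.sum_le_sum fun k _ => ?_
  rw [rowMul_apply, ← mul_pow, Real.norm_eq_abs]
  exact pow_le_pow_left₀ (abs_nonneg _) (abs_real_inner_le_norm _ _) 2

lemma half_trace_sub_half_trace_le {S₁ S₂ : Matrix (Fin n) (Fin d) ℝ}
    {M N₁ N₂ : Eucl n →L[ℝ] Eucl n} {e η : ℝ}
    (hN : ∀ h k, ⟪N₁ h, h⟫ + ⟪N₂ k, k⟫ ≤ ‖h - k‖ ^ 2 / e + η * (‖h‖ ^ 2 + ‖k‖ ^ 2)) :
    1 / 2 * Matrix.trace (S₁ * S₁ᵀ * opMatrix (M + N₁)) -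
      1 / 2 * Matrix.trace (S₂ * S₂ᵀ * -opMatrix N₂) ≤
      1 / 2 * ∑ k, ⟪M (colVec S₁ k), colVec S₁ k⟫ +
        1 / 2 * (‖S₁ - S₂‖ ^ 2 / e + η * (‖S₁‖ ^ 2 + ‖S₂‖ ^ 2)) := by
  have hcols : ∑ k, ⟪N₁ (colVec S₁ k), colVec S₁ k⟫ + ∑ k, ⟪N₂ (colVec S₂ k), colVec S₂ k⟫ ≤
      ‖S₁ - S₂‖ ^ 2 / e + η * (‖S₁‖ ^ 2 + ‖S₂‖ ^ 2) := by
    simp only [← sum_norm_colVec_sq, Finset.sum_div, Finset.mul_sum, ← Finset.sum_add_distrib]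
    exact Finset.sum_le_sum fun k _ => hN _ _
  rw [Matrix.mul_neg, Matrix.trace_neg, trace_mul_opMatrix, trace_mul_opMatrix]
  simp only [_root_.add_apply, inner_add_left, Finset.sum_add_distrib]
  linarith

lemma norm_rowMul_add_sub_le (D p q : Eucl n) (S : Matrix (Fin n) (Fin d) ℝ) :
    ‖rowMul (D + (p + q)) S - rowMul p S‖ ≤ ‖rowMul D S‖ + ‖q‖ * ‖S‖ := by
  have hsplit : rowMul (D + (p + q)) S - rowMul p S = rowMul D S + rowMul q S := by
    simp only [rowMul_add_left]
    abel
  rw [hsplit]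
  exact (norm_add_le _ _).trans (add_le_add_right (norm_rowMul_le q S) _)

lemma norm_rowMul_sub_add_le (p q : Eucl n) (S₁ S₂ : Matrix (Fin n) (Fin d) ℝ) :
    ‖rowMul p S₁ - rowMul (p + q) S₂‖ ≤ ‖p‖ * ‖S₁ - S₂‖ + ‖q‖ * ‖S₂‖ := by
  have hsplit : rowMul p S₁ - rowMul (p + q) S₂ = rowMul p (S₁ - S₂) - rowMul q S₂ := by
    rw [rowMul_add_left, rowMul_sub_right]
    abel
  rw [hsplit]
  exact (norm_sub_le _ _).trans (add_le_add (norm_rowMul_le p _) (norm_rowMul_le q S₂))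

end MatrixColumns

section Parameters

lemma continuousOn_param {P Q Y : Type*} [PseudoMetricSpace P] [TopologicalSpace Q]
    [PseudoMetricSpace Y] {F : P → Q → Y} {S : Set Q} {C : ℝ}
    (hF : ∀ p, ContinuousOn (F p) S)
    (hlip : ∀ q ∈ S, ∀ p p', dist (F p q) (F p' q) ≤ C * dist p p') :
    ContinuousOn (fun x : P × Q => F x.1 x.2) (Set.univ ×ˢ S) := by
  refine continuousOn_prod_of_continuousOn_lipschitzOnWith _ (Real.toNNReal C)
    (fun p _ => hF p) fun q hq => LipschitzOnWith.of_dist_le_mul fun p _ p' _ => ?_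
  exact (hlip q hq p p').trans (mul_le_mul_of_nonneg_right (Real.le_coe_toNNReal C) dist_nonneg)

lemma exists_time_modulus {P W Y : Type*} [PseudoMetricSpace P] [TopologicalSpace W]
    [CompactSpace W] [PseudoMetricSpace Y] {F : P → ℝ × W → Y} {I : Set ℝ} (hI : IsCompact I)
    {C : ℝ} (hF : ∀ p, ContinuousOn (F p) (I ×ˢ Set.univ))
    (hlip : ∀ t ∈ I, ∀ p p' w, dist (F p (t, w)) (F p' (t, w)) ≤ C * dist p p')
    {S : Set P} (hS : IsCompact S) {γ : ℝ} (hγ : 0 < γ) :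
    ∃ ρ > 0, ∀ p ∈ S, ∀ t ∈ I, ∀ s ∈ I, |t - s| < ρ → ∀ w,
      dist (F p (t, w)) (F p (s, w)) < γ := by
  have hjoint := continuousOn_param hF fun q hq p p' => hlip q.1 hq.1 p p' q.2
  have hassoc : Continuous fun q : (S ×ˢ I : Set (P × ℝ)) × W => (q.1.1.1, q.1.1.2, q.2) := by
    fun_prop
  let G : C((S ×ˢ I : Set (P × ℝ)) × W, Y) := ⟨fun q => F q.1.1.1 (q.1.1.2, q.2),
    hjoint.comp_continuous hassoc fun q => ⟨trivial, q.1.2.2, trivial⟩⟩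
  have := isCompact_iff_compactSpace.mp (hS.prod hI)
  obtain ⟨ρ, hρ, hmod⟩ := Metric.uniformContinuous_iff.mp
    (CompactSpace.uniformContinuous_of_continuous G.curry.continuous) γ hγ
  refine ⟨ρ, hρ, fun p hp t ht s hs hts w => ?_⟩
  have hclose : dist (⟨(p, t), hp, ht⟩ : (S ×ˢ I : Set (P × ℝ))) ⟨(p, s), hp, hs⟩ < ρ := by
    simpa [Subtype.dist_eq, Prod.dist_eq, Real.dist_eq, hρ] using hts
  exact (ContinuousMap.dist_apply_le_dist w).trans_lt (hmod hclose)

lemma exists_norm_le_add_mul {Q E Y : Type*} [TopologicalSpace Q] [SeminormedAddCommGroup E]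
    [SeminormedAddCommGroup Y] {g : Q → E → Y} {S : Set Q} (hS : IsCompact S) {C : ℝ}
    (hg : ContinuousOn (fun q => g q 0) S)
    (hlip : ∀ q ∈ S, ∀ x, ‖g q x - g q 0‖ ≤ C * ‖x - 0‖) :
    ∃ C₀, ∀ q ∈ S, ∀ x, ‖g q x‖ ≤ C₀ + C * ‖x‖ := by
  obtain ⟨C₀, hC₀⟩ := hS.exists_bound_of_continuousOn hg
  refine ⟨C₀, fun q hq x => (norm_le_norm_add_norm_sub' _ (g q 0)).trans (add_le_add (hC₀ q hq) ?_)⟩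
  simpa only [sub_zero] using hlip q hq x

lemma exists_iSup_iInf_sub_le {U V : Type*} [TopologicalSpace U] [CompactSpace U] [Nonempty U]
    [TopologicalSpace V] [CompactSpace V] [Nonempty V] {F F' : U → V → ℝ}
    (hF : Continuous fun q : U × V => F q.1 q.2) (hF' : Continuous fun q : U × V => F' q.1 q.2)
    {κ : ℝ} (hκ : 0 < κ) :
    ∃ u v, (⨆ u, ⨅ v, F u v) - (⨆ u, ⨅ v, F' u v) ≤ F u v - F' u v + κ := by
  have hbelow : ∀ {F : U → V → ℝ}, (Continuous fun q : U × V => F q.1 q.2) →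
      ∀ u, BddBelow (Set.range (F u)) := fun hF u =>
    (isCompact_range (hF.comp (Continuous.prodMk_right u))).bddBelow
  have habove : BddAbove (Set.range fun u => ⨅ v, F' u v) := by
    obtain ⟨C, hC⟩ := (isCompact_range hF').bddAbove
    refine ⟨C, ?_⟩
    rintro _ ⟨u, rfl⟩
    exact (ciInf_le (hbelow hF' u) (Classical.arbitrary V)).trans (hC ⟨(u, _), rfl⟩)
  obtain ⟨u, hu⟩ := exists_lt_of_lt_ciSup
    (show (⨆ u, ⨅ v, F u v) - κ / 2 < ⨆ u, ⨅ v, F u v by linarith)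
  obtain ⟨v, hv⟩ := exists_lt_of_ciInf_lt (show ⨅ v, F' u v < (⨅ v, F' u v) + κ / 2 by linarith)
  have hinf := ciInf_le (hbelow hF u) v
  have hsup := le_ciSup habove u
  exact ⟨u, v, by linarith⟩

end Parameters

section Hamiltonian

/-- Coefficients of the Isaacs equation with common Lipschitz and linear growth constant `K`. -/
structure IsaacsData {n d : ℕ} {U V : Type*} [TopologicalSpace U] [TopologicalSpace V] (T K : ℝ)
    (b : ℝ → Eucl n → U → V → Eucl n) (σ : ℝ → Eucl n → U → V → Matrix (Fin n) (Fin d) ℝ)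
    (f : ℝ → Eucl n → ℝ → Eucl d → U → V → ℝ) : Prop where
  pos : 0 < K
  b_cont : ∀ x, ContinuousOn (fun q : ℝ × U × V => b q.1 x q.2.1 q.2.2)
    (Set.Icc (0 : ℝ) T ×ˢ (Set.univ : Set (U × V)))
  σ_cont : ∀ x, ContinuousOn (fun q : ℝ × U × V => σ q.1 x q.2.1 q.2.2)
    (Set.Icc (0 : ℝ) T ×ˢ (Set.univ : Set (U × V)))
  f_cont : ∀ x y z, ContinuousOn (fun q : ℝ × U × V => f q.1 x y z q.2.1 q.2.2)
    (Set.Icc (0 : ℝ) T ×ˢ (Set.univ : Set (U × V)))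
  b_lip : ∀ t ∈ Set.Icc (0 : ℝ) T, ∀ x x' u v, ‖b t x u v - b t x' u v‖ ≤ K * ‖x - x'‖
  σ_lip : ∀ t ∈ Set.Icc (0 : ℝ) T, ∀ x x' u v, ‖σ t x u v - σ t x' u v‖ ≤ K * ‖x - x'‖
  f_lip : ∀ t ∈ Set.Icc (0 : ℝ) T, ∀ x x' y y' z z' u v,
    |f t x y z u v - f t x' y' z' u v| ≤ K * (‖x - x'‖ + |y - y'| + ‖z - z'‖)
  b_growth : ∀ t ∈ Set.Icc (0 : ℝ) T, ∀ x u v, ‖b t x u v‖ ≤ K * (1 + ‖x‖)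
  σ_growth : ∀ t ∈ Set.Icc (0 : ℝ) T, ∀ x u v, ‖σ t x u v‖ ≤ K * (1 + ‖x‖)

variable {n d : ℕ} {U V : Type*} [TopologicalSpace U] [TopologicalSpace V]
  {T K : ℝ} {b : ℝ → Eucl n → U → V → Eucl n}
  {σ : ℝ → Eucl n → U → V → Matrix (Fin n) (Fin d) ℝ}
  {f : ℝ → Eucl n → ℝ → Eucl d → U → V → ℝ}

lemma exists_isaacsData [CompactSpace U] [CompactSpace V]
    (hb_cont : ∀ x : Eucl n, ContinuousOn (fun q : ℝ × U × V => b q.1 x q.2.1 q.2.2)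
      (Set.Icc (0 : ℝ) T ×ˢ (Set.univ : Set (U × V))))
    (hσ_cont : ∀ x : Eucl n, ContinuousOn (fun q : ℝ × U × V => σ q.1 x q.2.1 q.2.2)
      (Set.Icc (0 : ℝ) T ×ˢ (Set.univ : Set (U × V))))
    (hbσ_lip : ∃ C > (0 : ℝ), ∀ t ∈ Set.Icc (0 : ℝ) T, ∀ (x x' : Eucl n) (u : U) (v : V),
      ‖b t x u v - b t x' u v‖ + ‖σ t x u v - σ t x' u v‖ ≤ C * ‖x - x'‖)
    (hf_cont : ∀ (x : Eucl n) (y : ℝ) (z : Eucl d), ContinuousOn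
      (fun q : ℝ × U × V => f q.1 x y z q.2.1 q.2.2)
      (Set.Icc (0 : ℝ) T ×ˢ (Set.univ : Set (U × V))))
    (hf_lip : ∃ C > (0 : ℝ), ∀ t ∈ Set.Icc (0 : ℝ) T,
      ∀ (x x' : Eucl n) (y y' : ℝ) (z z' : Eucl d) (u : U) (v : V),
      |f t x y z u v - f t x' y' z' u v| ≤ C * (‖x - x'‖ + |y - y'| + ‖z - z'‖)) :
    ∃ K, IsaacsData T K b σ f := by
  obtain ⟨C₁, hC₁, hbσ⟩ := hbσ_lip
  obtain ⟨C₂, -, hf⟩ := hf_lip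
  have hcompact : IsCompact (Set.Icc (0 : ℝ) T ×ˢ (Set.univ : Set (U × V))) :=
    isCompact_Icc.prod isCompact_univ
  have hb : ∀ t ∈ Set.Icc 0 T, ∀ x x' u v, ‖b t x u v - b t x' u v‖ ≤ C₁ * ‖x - x'‖ :=
    fun t ht x x' u v => (le_add_of_nonneg_right (norm_nonneg _)).trans (hbσ t ht x x' u v)
  have hσ : ∀ t ∈ Set.Icc 0 T, ∀ x x' u v, ‖σ t x u v - σ t x' u v‖ ≤ C₁ * ‖x - x'‖ :=
    fun t ht x x' u v => (le_add_of_nonneg_left (norm_nonneg _)).trans (hbσ t ht x x' u v)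
  obtain ⟨C₃, hb₀⟩ := exists_norm_le_add_mul (g := fun (q : ℝ × U × V) x => b q.1 x q.2.1 q.2.2)
    hcompact (hb_cont 0) fun q hq x => hb q.1 hq.1 x 0 q.2.1 q.2.2
  obtain ⟨C₄, hσ₀⟩ := exists_norm_le_add_mul (g := fun (q : ℝ × U × V) x => σ q.1 x q.2.1 q.2.2)
    hcompact (hσ_cont 0) fun q hq x => hσ q.1 hq.1 x 0 q.2.1 q.2.2
  obtain ⟨K, hK, hK₁, hK₂, hK₃, hK₄⟩ : ∃ K, 0 < K ∧ C₁ ≤ K ∧ C₂ ≤ K ∧ C₃ ≤ K ∧ C₄ ≤ K :=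
    ⟨max (max C₁ C₂) (max C₃ C₄), by simp [hC₁]⟩
  exact ⟨K, {
    pos := hK
    b_cont := hb_cont
    σ_cont := hσ_cont
    f_cont := hf_cont
    b_lip := fun t ht x x' u v => (hb t ht x x' u v).trans (by gcongr)
    σ_lip := fun t ht x x' u v => (hσ t ht x x' u v).trans (by gcongr)
    f_lip := fun t ht x x' y y' z z' u v => (hf t ht x x' y y' z z' u v).trans (by gcongr)
    b_growth := fun t ht x u v =>
      (hb₀ (t, u, v) ⟨ht, trivial⟩ x).trans (by rw [mul_one_add]; gcongr)
    σ_growth := fun t ht x u v =>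
      (hσ₀ (t, u, v) ⟨ht, trivial⟩ x).trans (by rw [mul_one_add]; gcongr) }⟩

/-- The expression whose lower value is the Hamiltonian. -/
def isaacsIntegrand (b : ℝ → Eucl n → U → V → Eucl n)
    (σ : ℝ → Eucl n → U → V → Matrix (Fin n) (Fin d) ℝ)
    (f : ℝ → Eucl n → ℝ → Eucl d → U → V → ℝ)
    (t : ℝ) (x : Eucl n) (y : ℝ) (p : Eucl n) (X : Matrix (Fin n) (Fin n) ℝ) (u : U) (v : V) : ℝ :=
  (1 / 2) * Matrix.trace (σ t x u v * (σ t x u v)ᵀ * X) + ⟪p, b t x u v⟫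
    + f t x y (rowMul p (σ t x u v)) u v

lemma IsaacsData.continuous_integrand (h : IsaacsData T K b σ f) {t : ℝ}
    (ht : t ∈ Set.Icc (0 : ℝ) T) (x : Eucl n) (y : ℝ) (p : Eucl n)
    (X : Matrix (Fin n) (Fin n) ℝ) :
    Continuous fun q : U × V => isaacsIntegrand b σ f t x y p X q.1 q.2 := by
  have hι : Continuous fun q : U × V => (t, q) := by fun_prop
  have hιm : ∀ q : U × V, (t, q) ∈ Set.Icc (0 : ℝ) T ×ˢ (Set.univ : Set (U × V)) :=
    fun q => ⟨ht, trivial⟩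
  have hb : Continuous fun q : U × V => b t x q.1 q.2 :=
    (h.b_cont x).comp_continuous hι hιm
  have hσ : Continuous fun q : U × V => σ t x q.1 q.2 :=
    (h.σ_cont x).comp_continuous hι hιm
  have hr : Continuous fun q : U × V => rowMul p (σ t x q.1 q.2) := by
    refine (PiLp.continuous_toLp 2 _).comp (continuous_pi fun j => ?_)
    fun_prop
  have hf : Continuous fun q : U × V => f t x y (rowMul p (σ t x q.1 q.2)) q.1 q.2 := by
    have h1 := continuousOn_param (P := Eucl d) (C := K) (F := fun z (q : U × V) =>
      f t x y z q.1 q.2) (S := Set.univ)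
      (fun z => ((h.f_cont x y z).comp_continuous hι hιm).continuousOn) (fun q _ z z' => by
        have := h.f_lip t ht x x y y z z' q.1 q.2
        simpa [dist_eq_norm] using this)
    exact h1.comp_continuous (hr.prodMk continuous_id) fun q => ⟨trivial, trivial⟩
  unfold isaacsIntegrand
  exact ((continuous_const.mul (((hσ.matrix_mul hσ.matrix_transpose).matrix_mul
    continuous_const).matrix_trace)).add (continuous_const.inner hb)).add hf

lemma IsaacsData.f_sub_le (h : IsaacsData T K b σ f) {t s : ℝ} (ht : t ∈ Set.Icc (0 : ℝ) T)
    (hs : s ∈ Set.Icc (0 : ℝ) T) (x y : Eucl n) (r : ℝ) (z z₁ z₂ : Eucl d) (u : U) (v : V) :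
    f t x r z₁ u v - f s y r z₂ u v ≤
      K * ‖z₁ - z‖ + |f t x r z u v - f s x r z u v| + K * (‖x - y‖ + ‖z - z₂‖) := by
  have hz₁ := (le_abs_self _).trans (h.f_lip t ht x x r r z₁ z u v)
  have hz₂ := (le_abs_self _).trans (h.f_lip s hs x y r r z z₂ u v)
  simp only [sub_self, norm_zero, abs_zero, zero_add, add_zero] at hz₁ hz₂
  linarith [le_abs_self (f t x r z u v - f s x r z u v)]

lemma inner_add_sub_inner_add_le {E : Type*} [NormedAddCommGroup E] [InnerProductSpace ℝ E]
    (D p q q' b₁ b₂ : E) : ⟪D + (p + q), b₁⟫ - ⟪p + q', b₂⟫ ≤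
      ⟪D, b₁⟫ + ‖p‖ * ‖b₁ - b₂‖ + ‖q‖ * ‖b₁‖ + ‖q'‖ * ‖b₂‖ := by
  have hp := real_inner_le_norm p (b₁ - b₂)
  have hq := real_inner_le_norm q b₁
  have hq' := neg_le_of_abs_le (abs_real_inner_le_norm q' b₂)
  rw [inner_sub_right] at hp
  rw [inner_add_left, inner_add_left, inner_add_left]
  linarith

/-- The error in comparing the Hamiltonians at the two points, `r` apart, of a maximum doubled with
penalty `‖x - y‖² / (2e)`: the coefficients are bounded by `Γ`, `K`-Lipschitz in space and vary by
at most `γ` in time, and the matrix inequality holds up to `η`. -/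
def doublingError (K Γ e η γ r : ℝ) : ℝ :=
  (γ + K * r) ^ 2 / (2 * e) + η * Γ ^ 2 + (1 + K) * (r / e * (γ + K * r)) + 2 * η * (1 + K) * Γ
    + γ + K * r + η

lemma IsaacsData.hamiltonian_sub_le [CompactSpace U] [CompactSpace V] [Nonempty U]
    [Nonempty V] (h : IsaacsData T K b σ f)
    {R t s τ α e η γ : ℝ} {x y p q q' D : Eucl n} {M N₁ N₂ : Eucl n →L[ℝ] Eucl n}
    (ht : t ∈ Set.Icc (0 : ℝ) T) (hs : s ∈ Set.Icc (0 : ℝ) T) (hx : ‖x‖ ≤ R) (hy : ‖y‖ ≤ R)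
    (hη : 0 < η) (he : 0 < e) (hp : ‖p‖ ≤ ‖x - y‖ / e) (hq : ‖q‖ ≤ η) (hq' : ‖q'‖ ≤ η)
    (hN : ∀ h k, ⟪N₁ h, h⟫ + ⟪N₂ k, k⟫ ≤ ‖h - k‖ ^ 2 / e + η * (‖h‖ ^ 2 + ‖k‖ ^ 2))
    (hbar : ∀ u v, τ + 1 / 2 * ∑ k, ⟪M (colVec (σ t x u v) k), colVec (σ t x u v) k⟫
      + ⟪D, b t x u v⟫ + K * ‖rowMul D (σ t x u v)‖ ≤ -α)
    (hb : ∀ u v, ‖b t x u v - b s x u v‖ ≤ γ) (hσ : ∀ u v, ‖σ t x u v - σ s x u v‖ ≤ γ)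
    (hf : ∀ z : Eucl d, ‖z‖ ≤ ‖x - y‖ / e * (K * (1 + R)) → ∀ u v,
      |f t x 0 z u v - f s x 0 z u v| ≤ γ) :
    τ + (lowerHamiltonian b σ f t x 0 (D + (p + q)) (opMatrix (M + N₁)) -
      lowerHamiltonian b σ f s y 0 (p + q') (-opMatrix N₂)) ≤
      -α + doublingError K (K * (1 + R)) e η γ ‖x - y‖ := by
  obtain ⟨u, v, huv⟩ := exists_iSup_iInf_sub_le
    (h.continuous_integrand ht x 0 (D + (p + q)) (opMatrix (M + N₁)))
    (h.continuous_integrand hs y 0 (p + q') (-opMatrix N₂)) hη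
  have hK := h.pos
  have hgrowth : ∀ z : Eucl n, ‖z‖ ≤ R → K * (1 + ‖z‖) ≤ K * (1 + R) := fun z hz => by gcongr
  have hσ₁ := (h.σ_growth t ht x u v).trans (hgrowth x hx)
  have hσ₂ := (h.σ_growth s hs y u v).trans (hgrowth y hy)
  have hb₁ := (h.b_growth t ht x u v).trans (hgrowth x hx)
  have hb₂ := (h.b_growth s hs y u v).trans (hgrowth y hy)
  have hσd := (norm_sub_le_norm_sub_add_norm_sub _ (σ s x u v) _).trans
    (add_le_add (hσ u v) (h.σ_lip s hs x y u v))
  have hbd := (norm_sub_le_norm_sub_add_norm_sub _ (b s x u v) _).trans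
    (add_le_add (hb u v) (h.b_lip s hs x y u v))
  have hpσ := (norm_rowMul_le p (σ t x u v)).trans
    (mul_le_mul hp hσ₁ (norm_nonneg _) (by positivity))
  generalize K * (1 + R) = Γ at *
  have htrace := (half_trace_sub_half_trace_le (S₁ := σ t x u v) (S₂ := σ s y u v) (M := M)
    hN).trans (add_le_add_right
      (c := 1 / 2 * ((γ + K * ‖x - y‖) ^ 2 / e + η * (Γ ^ 2 + Γ ^ 2))) (by gcongr) _)
  have hdrift := (inner_add_sub_inner_add_le D p q q' (b t x u v) (b s y u v)).trans
    (show _ ≤ ⟪D, b t x u v⟫ + ‖x - y‖ / e * (γ + K * ‖x - y‖) + η * Γ + η * Γ by gcongr)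
  have hdriver := h.f_sub_le ht hs x y 0 (rowMul p (σ t x u v)) (rowMul (D + (p + q)) (σ t x u v))
    (rowMul (p + q') (σ s y u v)) u v
  have hz₁ := (norm_rowMul_add_sub_le D p q (σ t x u v)).trans
    (show _ ≤ ‖rowMul D (σ t x u v)‖ + η * Γ by gcongr)
  have hz₂ := (norm_rowMul_sub_add_le p q' (σ t x u v) (σ s y u v)).trans
    (show _ ≤ ‖x - y‖ / e * (γ + K * ‖x - y‖) + η * Γ by gcongr)
  have hdriver' : f t x 0 (rowMul (D + (p + q)) (σ t x u v)) u v -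
      f s y 0 (rowMul (p + q') (σ s y u v)) u v ≤ K * (‖rowMul D (σ t x u v)‖ + η * Γ) + γ +
        K * (‖x - y‖ + (‖x - y‖ / e * (γ + K * ‖x - y‖) + η * Γ)) :=
    hdriver.trans (by gcongr; exact hf _ hpσ u v)
  change lowerHamiltonian b σ f t x 0 _ _ - lowerHamiltonian b σ f s y 0 _ _ ≤ _ at huv
  simp only [isaacsIntegrand] at huv
  rw [doublingError, mul_comm 2 e, ← div_div]
  linarith [hbar u v]

end Hamiltonian

section Barrier

/-- `log √(1 + |x|²) + 1` as a function of `r = |x|²`. -/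
def logWeight (r : ℝ) : ℝ := Real.log (1 + r) / 2 + 1

lemma one_le_logWeight {r : ℝ} (hr : 0 ≤ r) : 1 ≤ logWeight r := by
  have := Real.log_nonneg (le_add_of_nonneg_right hr : 1 ≤ 1 + r)
  unfold logWeight
  linarith

lemma hasDerivAt_logWeight {r : ℝ} (hr : 0 ≤ r) : HasDerivAt logWeight (1 / (1 + r) / 2) r :=
  ((((hasDerivAt_id r).const_add 1).log (by simp only [id]; positivity)).div_const 2).add_const 1

/-- The derivative of `exp (m * logWeight r ^ 2)`, doubled: `radialProfile m (|x|²) • x` is the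
gradient of `x ↦ exp (m * logWeight (|x|²) ^ 2)`. -/
def radialProfile (m r : ℝ) : ℝ :=
  2 * m * Real.exp (m * logWeight r ^ 2) * logWeight r / (1 + r)

/-- The common size, up to powers of `1 + r`, of all derivatives of `exp (m * logWeight r ^ 2)`. -/
def barrierScale (m r : ℝ) : ℝ := m ^ 2 * logWeight r ^ 2 * Real.exp (m * logWeight r ^ 2)

lemma one_le_mul_logWeight {m r : ℝ} (hm : 1 ≤ m) (hr : 0 ≤ r) : 1 ≤ m * logWeight r :=
  one_le_mul_of_one_le_of_one_le hm (one_le_logWeight hr)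

lemma one_le_barrierScale {m r : ℝ} (hm : 1 ≤ m) (hr : 0 ≤ r) : 1 ≤ barrierScale m r := by
  rw [barrierScale, ← mul_pow]
  exact one_le_mul_of_one_le_of_one_le (one_le_pow₀ (one_le_mul_logWeight hm hr))
    (Real.one_le_exp (by positivity))

lemma radialProfile_nonneg {m r : ℝ} (hm : 1 ≤ m) (hr : 0 ≤ r) : 0 ≤ radialProfile m r := by
  have := one_le_logWeight hr
  unfold radialProfile
  positivity

lemma radialProfile_le {m r : ℝ} (hm : 1 ≤ m) (hr : 0 ≤ r) :
    radialProfile m r ≤ 2 * barrierScale m r / (1 + r) := by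
  have hmL := one_le_mul_logWeight hm hr
  calc radialProfile m r = 2 * (m * logWeight r * Real.exp (m * logWeight r ^ 2)) / (1 + r) := by
        unfold radialProfile; ring
    _ ≤ 2 * ((m * logWeight r) ^ 2 * Real.exp (m * logWeight r ^ 2)) / (1 + r) := by
        gcongr; exact le_self_pow₀ hmL two_ne_zero
    _ = _ := by rw [barrierScale, mul_pow]

lemma exists_hasDerivAt_radialProfile_le {m r : ℝ} (hm : 1 ≤ m) (hr : 0 ≤ r) :
    ∃ g', HasDerivAt (radialProfile m) g' r ∧ g' ≤ 2 * barrierScale m r / (1 + r) ^ 2 := by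
  have hderiv : HasDerivAt (radialProfile m) (2 * m * Real.exp (m * logWeight r ^ 2) /
      (1 + r) ^ 2 * (m * logWeight r ^ 2 + 1 / 2 - logWeight r)) r := by
    have hL := hasDerivAt_logWeight hr
    refine ((((hL.pow 2).const_mul m).exp.const_mul (2 * m)).mul hL |>.div
      ((hasDerivAt_id r).const_add 1) (by simp only [id]; positivity)).congr_deriv ?_
    simp only [Pi.pow_apply, Pi.mul_apply, id]
    field_simp
    ring
  refine ⟨_, hderiv, ?_⟩
  calc _ ≤ 2 * m * Real.exp (m * logWeight r ^ 2) / (1 + r) ^ 2 * (m * logWeight r ^ 2) := by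
        gcongr; linarith [one_le_logWeight hr]
    _ = _ := by unfold barrierScale; ring

variable {E : Type*} [NormedAddCommGroup E]

/-- `exp ((log √(1 + |x|²) + 1)² / (c (t - a)))`, which blows up as `t ↓ a` and outgrows every
function of class `Θ` when `t` is close to `a`. -/
def barrier (c a t : ℝ) (x : E) : ℝ :=
  Real.exp ((c * (t - a))⁻¹ * logWeight (‖x‖ ^ 2) ^ 2)

lemma barrier_pos (c a t : ℝ) (x : E) : 0 < barrier c a t x := Real.exp_pos _

lemma one_add_norm_sq_le (x : E) : (1 + ‖x‖) ^ 2 ≤ 2 * (1 + ‖x‖ ^ 2) := by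
  nlinarith [sq_nonneg (1 - ‖x‖)]

lemma hasDerivAt_barrier {c a t : ℝ} (hc : 0 < c) (ht : a < t) (x : E) :
    HasDerivAt (fun s => barrier c a s x)
      (-(c * barrierScale (c * (t - a))⁻¹ (‖x‖ ^ 2))) t := by
  have h0 : c * (t - a) ≠ 0 := (mul_pos hc (sub_pos.mpr ht)).ne'
  refine ((((((hasDerivAt_id t).sub_const a).const_mul c).inv h0).mul_const
    (logWeight (‖x‖ ^ 2) ^ 2)).exp).congr_deriv ?_
  simp only [Pi.inv_apply, id, barrierScale]
  field_simp

lemma exp_le_barrier {c a t A : ℝ} (hA : A ≤ (c * (t - a))⁻¹) (hA0 : 0 ≤ A) (x : E) :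
    Real.exp (A * Real.log ((‖x‖ ^ 2 + 1) ^ ((1 : ℝ) / 2)) ^ 2) ≤ barrier c a t x := by
  refine Real.exp_le_exp.mpr (mul_le_mul hA ?_ (sq_nonneg _) (hA0.trans hA))
  have hlog : Real.log ((‖x‖ ^ 2 + 1) ^ ((1 : ℝ) / 2)) = Real.log (1 + ‖x‖ ^ 2) / 2 := by
    rw [Real.log_rpow (by positivity), add_comm]; ring
  have h0 : 0 ≤ Real.log (1 + ‖x‖ ^ 2) :=
    Real.log_nonneg (le_add_of_nonneg_right (sq_nonneg _))
  rw [hlog, logWeight]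
  gcongr
  exact le_add_of_nonneg_right zero_le_one

lemma inv_le_barrier {c a t : ℝ} (h : 0 ≤ (c * (t - a))⁻¹) (x : E) :
    (c * (t - a))⁻¹ ≤ barrier c a t x :=
  calc (c * (t - a))⁻¹ ≤ (c * (t - a))⁻¹ * logWeight (‖x‖ ^ 2) ^ 2 :=
        le_mul_of_one_le_right h (one_le_pow₀ (one_le_logWeight (sq_nonneg _)))
    _ ≤ barrier c a t x := (le_add_of_nonneg_right zero_le_one).trans (Real.add_one_le_exp _)

variable [InnerProductSpace ℝ E]

lemma contDiffAt_barrier {c a t : ℝ} (hc : 0 < c) (ht : a < t) (x : E) {k : WithTop ℕ∞} :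
    ContDiffAt ℝ k (fun p : ℝ × E => barrier c a p.1 p.2) (t, x) := by
  have hm : ContDiffAt ℝ k (fun p : ℝ × E => (c * (p.1 - a))⁻¹) (t, x) :=
    (contDiffAt_const.mul (contDiffAt_fst.sub contDiffAt_const)).inv
      (mul_pos hc (sub_pos.mpr ht)).ne'
  have hL : ContDiffAt ℝ k (fun p : ℝ × E => logWeight (‖p.2‖ ^ 2)) (t, x) :=
    (((contDiffAt_const.add (contDiffAt_snd.norm_sq ℝ)).log (by positivity)).div_const 2).add
      contDiffAt_const
  exact (hm.mul (hL.pow 2)).exp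

lemma hasGradientAt_barrier [CompleteSpace E] (c a t : ℝ) (x : E) :
    HasGradientAt (barrier c a t) (radialProfile (c * (t - a))⁻¹ (‖x‖ ^ 2) • x) x := by
  rw [hasGradientAt_iff_hasFDerivAt]
  have hsq : HasFDerivAt (fun y : E => ‖y‖ ^ 2) (2 • innerSL ℝ x) x :=
    (hasStrictFDerivAt_norm_sq x).hasFDerivAt
  refine ((((hasDerivAt_logWeight (sq_nonneg ‖x‖)).pow 2).const_mul
    (c * (t - a))⁻¹).exp.comp_hasFDerivAt x hsq).congr_fderiv ?_
  ext h
  simp only [_root_.smul_apply, InnerProductSpace.toDual_apply_apply, innerSL_apply_apply,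
    smul_eq_mul, real_inner_smul_left, radialProfile, nsmul_eq_mul, Pi.pow_apply]
  field_simp
  push_cast
  ring

lemma hasFDerivAt_smul_radial {g : ℝ → ℝ} {g' : ℝ} {x : E} (hg : HasDerivAt g g' (‖x‖ ^ 2)) :
    HasFDerivAt (fun y : E => g (‖y‖ ^ 2) • y)
      (g (‖x‖ ^ 2) • ContinuousLinearMap.id ℝ E + (2 * g') • (innerSL ℝ x).smulRight x) x := by
  have hsq : HasFDerivAt (fun y : E => ‖y‖ ^ 2) (2 • innerSL ℝ x) x :=
    (hasStrictFDerivAt_norm_sq x).hasFDerivAt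
  refine ((hg.comp_hasFDerivAt x hsq).smul (hasFDerivAt_id x)).congr_fderiv ?_
  ext1 h
  simp only [_root_.add_apply, _root_.smul_apply, ContinuousLinearMap.smulRight_apply,
    innerSL_apply_apply, ContinuousLinearMap.id_apply, id_eq, smul_smul, smul_eq_mul,
    Function.comp_apply, nsmul_eq_mul]
  push_cast
  ring_nf

lemma exists_hasFDerivAt_radialProfile_smul {m : ℝ} (hm : 1 ≤ m) (x : E) :
    ∃ M : E →L[ℝ] E, HasFDerivAt (fun y : E => radialProfile m (‖y‖ ^ 2) • y) M x ∧
      ∀ s, ⟪M s, s⟫ ≤ 6 * barrierScale m (‖x‖ ^ 2) / (1 + ‖x‖ ^ 2) * ‖s‖ ^ 2 := by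
  obtain ⟨g', hg', hg'_le⟩ := exists_hasDerivAt_radialProfile_le hm (sq_nonneg ‖x‖)
  refine ⟨_, hasFDerivAt_smul_radial hg', fun s => ?_⟩
  have hg := radialProfile_le hm (sq_nonneg ‖x‖)
  have hP := one_le_barrierScale hm (sq_nonneg ‖x‖)
  generalize barrierScale m (‖x‖ ^ 2) = P at *
  have hinner : ⟪x, s⟫ ^ 2 ≤ (1 + ‖x‖ ^ 2) * ‖s‖ ^ 2 := by
    have := sq_le_sq.mpr ((abs_real_inner_le_norm x s).trans (le_abs_self _))
    nlinarith [sq_nonneg ‖s‖]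
  calc _ = radialProfile m (‖x‖ ^ 2) * ‖s‖ ^ 2 + 2 * g' * ⟪x, s⟫ ^ 2 := by
        simp only [_root_.add_apply, _root_.smul_apply, ContinuousLinearMap.smulRight_apply,
          innerSL_apply_apply, ContinuousLinearMap.id_apply, inner_add_left,
          real_inner_smul_left, real_inner_self_eq_norm_sq]
        ring
    _ ≤ 2 * P / (1 + ‖x‖ ^ 2) * ‖s‖ ^ 2 +
        2 * (2 * P / (1 + ‖x‖ ^ 2) ^ 2) * ((1 + ‖x‖ ^ 2) * ‖s‖ ^ 2) := by gcongr
    _ = 6 * P / (1 + ‖x‖ ^ 2) * ‖s‖ ^ 2 := by field_simp; ring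

lemma norm_radialProfile_smul_mul_le {m : ℝ} (hm : 1 ≤ m) (x : E) :
    ‖radialProfile m (‖x‖ ^ 2) • x‖ * (1 + ‖x‖) ≤ 4 * barrierScale m (‖x‖ ^ 2) := by
  have hx : ‖x‖ * (1 + ‖x‖) ≤ 2 * (1 + ‖x‖ ^ 2) := by
    nlinarith [one_add_norm_sq_le x, norm_nonneg x]
  have hP := one_le_barrierScale hm (sq_nonneg ‖x‖)
  rw [norm_smul, Real.norm_of_nonneg (radialProfile_nonneg hm (sq_nonneg _)), mul_assoc]
  calc radialProfile m (‖x‖ ^ 2) * (‖x‖ * (1 + ‖x‖))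
      ≤ 2 * barrierScale m (‖x‖ ^ 2) / (1 + ‖x‖ ^ 2) * (2 * (1 + ‖x‖ ^ 2)) := by
        gcongr; exact radialProfile_le hm (sq_nonneg _)
    _ = 4 * barrierScale m (‖x‖ ^ 2) := by field_simp; ring

end Barrier

section BarrierEstimate

variable {n d : ℕ} {U V : Type*} [TopologicalSpace U] [TopologicalSpace V]
  {T K : ℝ} {b : ℝ → Eucl n → U → V → Eucl n}
  {σ : ℝ → Eucl n → U → V → Matrix (Fin n) (Fin d) ℝ}
  {f : ℝ → Eucl n → ℝ → Eucl d → U → V → ℝ}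

/-- The rate at which `barrier` decays in time: it beats the second order part (`6K²`) and the two
first order parts (`4K` and `4K²`) by one unit. -/
def barrierRate (K : ℝ) : ℝ := 10 * K ^ 2 + 4 * K + 1

lemma barrierRate_pos {K : ℝ} (hK : 0 < K) : 0 < barrierRate K := by
  unfold barrierRate
  positivity

lemma IsaacsData.neg_barrierRate_mul_add_le (h : IsaacsData T K b σ f) {t P : ℝ}
    (ht : t ∈ Set.Icc (0 : ℝ) T) {x D : Eucl n} {M : Eucl n →L[ℝ] Eucl n} (hP : 1 ≤ P)
    (hM : ∀ s, ⟪M s, s⟫ ≤ 6 * P / (1 + ‖x‖ ^ 2) * ‖s‖ ^ 2) (hD : ‖D‖ * (1 + ‖x‖) ≤ 4 * P)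
    (u : U) (v : V) :
    -(barrierRate K * P) + 1 / 2 * ∑ k, ⟪M (colVec (σ t x u v) k), colVec (σ t x u v) k⟫
      + ⟪D, b t x u v⟫ + K * ‖rowMul D (σ t x u v)‖ ≤ -1 := by
  have hK := h.pos
  have hbound : ‖D‖ * (K * (1 + ‖x‖)) ≤ 4 * K * P :=
    calc _ = K * (‖D‖ * (1 + ‖x‖)) := by ring
      _ ≤ K * (4 * P) := by gcongr
      _ = 4 * K * P := by ring
  have hsecond : ∑ k, ⟪M (colVec (σ t x u v) k), colVec (σ t x u v) k⟫ ≤ 12 * K ^ 2 * P :=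
    calc _ ≤ ∑ k, 6 * P / (1 + ‖x‖ ^ 2) * ‖colVec (σ t x u v) k‖ ^ 2 :=
          Finset.sum_le_sum fun k _ => hM _
      _ = 6 * P / (1 + ‖x‖ ^ 2) * ‖σ t x u v‖ ^ 2 := by
          rw [← Finset.mul_sum, sum_norm_colVec_sq]
      _ ≤ 6 * P / (1 + ‖x‖ ^ 2) * (K * (1 + ‖x‖)) ^ 2 := by
          gcongr; exact h.σ_growth t ht x u v
      _ ≤ 6 * P / (1 + ‖x‖ ^ 2) * (K ^ 2 * (2 * (1 + ‖x‖ ^ 2))) := by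
          rw [mul_pow]; gcongr; exact one_add_norm_sq_le x
      _ = 12 * K ^ 2 * P := by field_simp; ring
  have hdrift : ⟪D, b t x u v⟫ ≤ 4 * K * P :=
    (real_inner_le_norm _ _).trans
      ((mul_le_mul_of_nonneg_left (h.b_growth t ht x u v) (norm_nonneg _)).trans hbound)
  have hdriver : ‖rowMul D (σ t x u v)‖ ≤ 4 * K * P :=
    (norm_rowMul_le _ _).trans
      ((mul_le_mul_of_nonneg_left (h.σ_growth t ht x u v) (norm_nonneg _)).trans hbound)
  have hdriver' := mul_le_mul_of_nonneg_left hdriver hK.le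
  unfold barrierRate
  linarith

lemma IsaacsData.exists_barrier_derivatives (h : IsaacsData T K b σ f) {a t α : ℝ}
    (ht : t ∈ Set.Icc (0 : ℝ) T) (hat : a < t) (hμ : barrierRate K * (t - a) ≤ 1) (hα : 0 ≤ α)
    (x : Eucl n) :
    ∃ (τ : ℝ) (D : Eucl n → Eucl n) (M : Eucl n →L[ℝ] Eucl n),
      HasDerivAt (fun s => α * barrier (barrierRate K) a s x) τ t ∧
      (∀ y, HasGradientAt (fun y => α * barrier (barrierRate K) a t y) (D y) y) ∧
      HasFDerivAt D M x ∧ ∀ u v,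
        τ + 1 / 2 * ∑ k, ⟪M (colVec (σ t x u v) k), colVec (σ t x u v) k⟫
          + ⟪D x, b t x u v⟫ + K * ‖rowMul (D x) (σ t x u v)‖ ≤ -α := by
  have hc := barrierRate_pos h.pos
  set m := (barrierRate K * (t - a))⁻¹ with hm
  have hm1 : 1 ≤ m := (one_le_inv₀ (mul_pos hc (sub_pos.mpr hat))).mpr hμ
  obtain ⟨M, hM, hM_le⟩ := exists_hasFDerivAt_radialProfile_smul hm1 x
  refine ⟨_, fun y => α • (radialProfile m (‖y‖ ^ 2) • y), α • M,
    (hasDerivAt_barrier hc hat x).const_mul α, fun y => ?_, hM.const_smul α, fun u v => ?_⟩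
  · have := (hasGradientAt_barrier (barrierRate K) a t y).hasFDerivAt.const_mul α
    rw [hasGradientAt_iff_hasFDerivAt]
    exact this.congr_fderiv (by simp [m])
  · have hlin := mul_le_mul_of_nonneg_left (h.neg_barrierRate_mul_add_le ht
      (one_le_barrierScale hm1 (sq_nonneg _)) hM_le (norm_radialProfile_smul_mul_le hm1 x) u v) hα
    simp only [_root_.smul_apply, real_inner_smul_left, ← Finset.mul_sum, rowMul_smul_left,
      norm_smul, Real.norm_of_nonneg hα, ← hm] at hlin ⊢
    linarith

end BarrierEstimate

section Localization

lemma exists_penalty_le {X : Type*} [PseudoMetricSpace X] {S : Set X} (hS : IsCompact S)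
    {u v : X → ℝ} (hu : ContinuousOn u S) (hv : ContinuousOn v S) {κ : ℝ} (hκ : 0 < κ) :
    ∃ r > 0, ∀ Q : X → X → ℝ, (∀ z, Q z z = 0) → (∀ z w, dist z w ^ 2 ≤ r * Q z w) →
      ∀ η ≤ r, ∀ z ∈ S, ∀ w ∈ S,
        (∀ z' ∈ S, ∀ w' ∈ S, u z' + v w' - Q z' w' / 2 ≤ u z + v w - Q z w / 2 + η) →
        Q z w ≤ κ ∧ ∀ y ∈ S, u y + v y ≤ u z + v z + κ ∧ u y + v y ≤ u w + v w + κ := by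
  obtain ⟨N, hN⟩ := hS.exists_bound_of_continuousOn hv
  obtain ⟨ρ₁, hρ₁, hu'⟩ := Metric.uniformContinuousOn_iff.mp
    (hS.uniformContinuousOn_of_continuous hu) (κ / 4) (by positivity)
  obtain ⟨ρ₂, hρ₂, hv'⟩ := Metric.uniformContinuousOn_iff.mp
    (hS.uniformContinuousOn_of_continuous hv) (κ / 4) (by positivity)
  set r := min (min 1 (κ / 4)) (min ρ₁ ρ₂ ^ 2 / (4 * |N| + 3))
  have hr0 : 0 < r := by positivity
  refine ⟨r, hr0, fun Q hQ hdist η hη z hz w hw hmax => ?_⟩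
  have hη1 : η ≤ 1 := hη.trans ((min_le_left _ _).trans (min_le_left _ _))
  have hηκ : η ≤ κ / 4 := hη.trans ((min_le_left _ _).trans (min_le_right _ _))
  have hdiag : ∀ y ∈ S, u y + v y ≤ u z + v w - Q z w / 2 + η := fun y hy => by
    simpa only [hQ, zero_div, sub_zero] using hmax y hy y hy
  have hQN : Q z w ≤ 4 * |N| + 2 := by
    have hvw := (le_abs_self _).trans ((hN w hw).trans (le_abs_self _))
    have hvz := (neg_le_abs _).trans ((hN z hz).trans (le_abs_self _))
    linarith [hdiag z hz]
  have hzw : dist z w < min ρ₁ ρ₂ := by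
    refine lt_of_pow_lt_pow_left₀ 2 (by positivity) ?_
    calc dist z w ^ 2 ≤ r * Q z w := hdist z w
      _ < r * (4 * |N| + 3) := by gcongr; linarith
      _ ≤ min ρ₁ ρ₂ ^ 2 := (le_div_iff₀ (by positivity)).mp (min_le_right _ _)
  have huzw := abs_lt.mp (hu' z hz w hw (hzw.trans_le (min_le_left _ _)))
  have hvzw := abs_lt.mp (hv' z hz w hw (hzw.trans_le (min_le_right _ _)))
  have hQ0 : 0 ≤ Q z w := nonneg_of_mul_nonneg_right ((sq_nonneg _).trans (hdist z w)) hr0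
  refine ⟨by linarith [hdiag z hz], fun y hy => ⟨?_, ?_⟩⟩ <;> linarith [hdiag y hy]

variable {E : Type*} [NormedAddCommGroup E] [InnerProductSpace ℝ E]

/-- The anisotropic scaling `(t, x) ↦ (t / δ, x / e)`, used as penalization operator. -/
def anisotropicScaling (δ e : ℝ) : WithLp 2 (ℝ × E) →L[ℝ] WithLp 2 (ℝ × E) :=
  (WithLp.prodContinuousLinearEquiv 2 ℝ ℝ E).symm.toContinuousLinearMap ∘L
    ((δ⁻¹ • WithLp.fstL 2 ℝ ℝ E).prod (e⁻¹ • WithLp.sndL 2 ℝ ℝ E))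

lemma inner_anisotropicScaling (δ e : ℝ) (z w : WithLp 2 (ℝ × E)) :
    ⟪anisotropicScaling δ e z, w⟫ = δ⁻¹ * (z.fst * w.fst) + e⁻¹ * ⟪z.snd, w.snd⟫ := by
  calc ⟪anisotropicScaling δ e z, w⟫ = ⟪δ⁻¹ * z.fst, w.fst⟫ + ⟪e⁻¹ • z.snd, w.snd⟫ :=
        inner_withLp_prod _ _
    _ = δ⁻¹ * (z.fst * w.fst) + e⁻¹ * ⟪z.snd, w.snd⟫ := by
      rw [real_inner_smul_left, RCLike.inner_apply, conj_trivial]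
      ring

lemma inner_anisotropicScaling_comm (δ e : ℝ) (z w : WithLp 2 (ℝ × E)) :
    ⟪anisotropicScaling δ e z, w⟫ = ⟪z, anisotropicScaling δ e w⟫ := by
  rw [real_inner_comm _ z, inner_anisotropicScaling, inner_anisotropicScaling,
    real_inner_comm z.snd, mul_comm z.fst]

lemma inner_anisotropicScaling_self (δ e : ℝ) (z : WithLp 2 (ℝ × E)) :
    ⟪anisotropicScaling δ e z, z⟫ = z.fst ^ 2 / δ + ‖z.snd‖ ^ 2 / e := by
  rw [inner_anisotropicScaling, real_inner_self_eq_norm_sq]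
  ring

lemma norm_sq_le_mul_inner_anisotropicScaling {δ e r : ℝ} (hδ : 0 < δ) (he : 0 < e) (hδr : δ ≤ r)
    (her : e ≤ r) (z : WithLp 2 (ℝ × E)) : ‖z‖ ^ 2 ≤ r * ⟪anisotropicScaling δ e z, z⟫ := by
  rw [inner_anisotropicScaling_self, WithLp.prod_norm_sq_eq_of_L2, Real.norm_eq_abs, sq_abs]
  calc z.fst ^ 2 + ‖z.snd‖ ^ 2 = δ * (z.fst ^ 2 / δ) + e * (‖z.snd‖ ^ 2 / e) := by field_simp
    _ ≤ r * (z.fst ^ 2 / δ) + r * (‖z.snd‖ ^ 2 / e) := by gcongr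
    _ = r * (z.fst ^ 2 / δ + ‖z.snd‖ ^ 2 / e) := by ring

lemma exists_localized_doubling [FiniteDimensional ℝ E] {S : Set (WithLp 2 (ℝ × E))}
    (hS : IsCompact S) {u v : WithLp 2 (ℝ × E) → ℝ} (hu : ContinuousOn u S)
    (hv : ContinuousOn v S) {z₀ : WithLp 2 (ℝ × E)} (hz₀ : z₀ ∈ S) (hpos : 0 < u z₀ + v z₀)
    {κ : ℝ} (hκ : 0 < κ) :
    ∃ r > 0, ∀ e δ η : ℝ, 0 < e → 0 < δ → 0 < η → e ≤ r → δ ≤ r → η ≤ r →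
      ∃ z ∈ S, ∃ w ∈ S, ∃ a₁ a₂ : WithLp 2 (ℝ × E),
      ∃ B₁ B₂ : WithLp 2 (ℝ × E) →L[ℝ] WithLp 2 (ℝ × E),
        0 < u z + v z ∧ 0 < u w + v w ∧
        (z.fst - w.fst) ^ 2 / δ + ‖z.snd - w.snd‖ ^ 2 / e ≤ κ ∧
        HasUpperJet S u z a₁ B₁ ∧ HasUpperJet S v w a₂ B₂ ∧
        |a₁.fst + a₂.fst| ≤ 2 * η ∧ ‖a₁.snd - e⁻¹ • (z.snd - w.snd)‖ ≤ η ∧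
        ‖-a₂.snd - e⁻¹ • (z.snd - w.snd)‖ ≤ η ∧
        ∀ h k : E, ⟪B₁ (WithLp.toLp 2 (0, h)), WithLp.toLp 2 (0, h)⟫ +
          ⟪B₂ (WithLp.toLp 2 (0, k)), WithLp.toLp 2 (0, k)⟫ ≤ ‖h - k‖ ^ 2 / e := by
  obtain ⟨r, hr, hloc⟩ := exists_penalty_le hS hu hv (lt_min hκ (half_pos hpos))
  refine ⟨r, hr, fun e δ η he hδ hη her hδr hηr => ?_⟩
  set A : WithLp 2 (ℝ × E) →L[ℝ] WithLp 2 (ℝ × E) := anisotropicScaling δ e with hA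
  obtain ⟨z, hz, w, hw, a₁, a₂, B₁, B₂, hmax, hj₁, hj₂, ha₁, ha₂, hB⟩ :=
    exists_doubling_jets hS ⟨z₀, hz₀⟩ hu hv (inner_anisotropicScaling_comm δ e)
      (fun h => by rw [inner_anisotropicScaling_self]; positivity) hη
  obtain ⟨hQ, hval⟩ := hloc (fun z w => ⟪A (z - w), z - w⟫) (by simp)
    (fun z w => dist_eq_norm z w ▸ norm_sq_le_mul_inner_anisotropicScaling hδ he hδr her _)
    η hηr z hz w hw hmax
  have hκ₀ := min_le_right κ ((u z₀ + v z₀) / 2)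
  refine ⟨z, hz, w, hw, a₁, a₂, B₁, B₂, by linarith [hval z₀ hz₀], by linarith [hval z₀ hz₀],
    ?_, hj₁, hj₂, ?_, (WithLp.norm_snd_le _ (a₁ - A (z - w))).trans ha₁, ?_, fun h k => ?_⟩
  · rw [hA, inner_anisotropicScaling_self] at hQ
    exact hQ.trans (min_le_left _ _)
  · calc |a₁.fst + a₂.fst| = |(a₁ - A (z - w)).fst + (a₂ + A (z - w)).fst| := by
          rw [WithLp.sub_fst, WithLp.add_fst, sub_add_add_cancel]
      _ ≤ |(a₁ - A (z - w)).fst| + |(a₂ + A (z - w)).fst| := abs_add_le _ _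
      _ ≤ η + η := add_le_add ((WithLp.norm_fst_le _ _).trans ha₁)
          ((WithLp.norm_fst_le _ _).trans ha₂)
      _ = 2 * η := (two_mul η).symm
  · rw [← norm_neg, neg_sub, sub_neg_eq_add, add_comm]
    exact (WithLp.norm_snd_le _ (a₂ + A (z - w))).trans ha₂
  · refine (hB _ _).trans_eq ?_
    rw [inner_anisotropicScaling_self]
    simp

variable {n d : ℕ} {U V : Type*} [TopologicalSpace U] [TopologicalSpace V]
  {T K : ℝ} {b : ℝ → Eucl n → U → V → Eucl n}
  {σ : ℝ → Eucl n → U → V → Matrix (Fin n) (Fin d) ℝ}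
  {f : ℝ → Eucl n → ℝ → Eucl d → U → V → ℝ}

lemma IsaacsData.dist_f_le (h : IsaacsData T K b σ f) {t : ℝ} (ht : t ∈ Set.Icc (0 : ℝ) T)
    (r : ℝ) (p p' : Eucl n × Eucl d) (u : U) (v : V) :
    dist (f t p.1 r p.2 u v) (f t p'.1 r p'.2 u v) ≤ 2 * K * dist p p' := by
  have hf := h.f_lip t ht p.1 p'.1 r r p.2 p'.2 u v
  have hK := h.pos
  rw [sub_self, abs_zero, add_zero, ← dist_eq_norm, ← dist_eq_norm, ← Real.dist_eq] at hf
  calc _ ≤ K * (dist p p' + dist p p') :=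
        hf.trans (by gcongr; exacts [le_max_left _ _, le_max_right _ _])
    _ = 2 * K * dist p p' := by ring

lemma IsaacsData.exists_time_modulus [CompactSpace U] [CompactSpace V]
    (h : IsaacsData T K b σ f) (R Z r : ℝ) {γ : ℝ} (hγ : 0 < γ) :
    ∃ ρ > 0, ∀ t ∈ Set.Icc (0 : ℝ) T, ∀ s ∈ Set.Icc (0 : ℝ) T, |t - s| < ρ →
      ∀ x : Eucl n, ‖x‖ ≤ R → (∀ u v, ‖b t x u v - b s x u v‖ ≤ γ) ∧
        (∀ u v, ‖σ t x u v - σ s x u v‖ ≤ γ) ∧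
        ∀ z : Eucl d, ‖z‖ ≤ Z → ∀ u v, |f t x r z u v - f s x r z u v| ≤ γ := by
  obtain ⟨ρ₁, hρ₁, hb⟩ := _root_.exists_time_modulus (C := K) isCompact_Icc
    (F := fun (x : Eucl n) (q : ℝ × U × V) => b q.1 x q.2.1 q.2.2) h.b_cont
    (fun t ht x x' q => by simpa only [dist_eq_norm] using h.b_lip t ht x x' q.1 q.2)
    (isCompact_closedBall 0 R) hγ
  obtain ⟨ρ₂, hρ₂, hσ⟩ := _root_.exists_time_modulus (C := K) isCompact_Icc
    (F := fun (x : Eucl n) (q : ℝ × U × V) => σ q.1 x q.2.1 q.2.2) h.σ_cont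
    (fun t ht x x' q => by simpa only [dist_eq_norm] using h.σ_lip t ht x x' q.1 q.2)
    (isCompact_closedBall 0 R) hγ
  obtain ⟨ρ₃, hρ₃, hf⟩ := _root_.exists_time_modulus (C := 2 * K) isCompact_Icc
    (F := fun (p : Eucl n × Eucl d) (q : ℝ × U × V) => f q.1 p.1 r p.2 q.2.1 q.2.2)
    (fun p => h.f_cont p.1 r p.2) (fun t ht p p' q => h.dist_f_le ht r p p' q.1 q.2)
    ((isCompact_closedBall 0 R).prod (isCompact_closedBall 0 Z)) hγ
  refine ⟨min ρ₁ (min ρ₂ ρ₃), by positivity, fun t ht s hs hts x hx => ?_⟩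
  obtain ⟨hts₁, hts₂, hts₃⟩ : |t - s| < ρ₁ ∧ |t - s| < ρ₂ ∧ |t - s| < ρ₃ := by
    simpa only [lt_min_iff] using hts
  simp only [← dist_eq_norm, ← Real.dist_eq]
  exact ⟨fun u v => (hb x (by simpa using hx) t ht s hs hts₁ (u, v)).le,
    fun u v => (hσ x (by simpa using hx) t ht s hs hts₂ (u, v)).le, fun z hz u v =>
      (hf (x, z) ⟨by simpa using hx, by simpa using hz⟩ t ht s hs hts₃ (u, v)).le⟩

end Localization

section Cylinder

open Filter Topology

variable {E : Type*} [NormedAddCommGroup E]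

/-- The closed cylinder `[a, b] × {‖x‖ ≤ R}` in the Euclidean product of time and space. -/
def cylinder (E : Type*) [NormedAddCommGroup E] (a b R : ℝ) : Set (WithLp 2 (ℝ × E)) :=
  {z | z.fst ∈ Set.Icc a b ∧ ‖z.snd‖ ≤ R}

lemma isCompact_cylinder [ProperSpace E] (a b R : ℝ) : IsCompact (cylinder E a b R) := by
  suffices h : cylinder E a b R = WithLp.toLp 2 '' (Set.Icc a b ×ˢ Metric.closedBall 0 R) by
    rw [h]
    exact (isCompact_Icc.prod (isCompact_closedBall 0 R)).image
      (WithLp.prod_continuous_toLp 2 ℝ E)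
  ext z
  constructor
  · rintro ⟨ht, hx⟩
    exact ⟨(z.fst, z.snd), ⟨ht, by simpa using hx⟩, rfl⟩
  · rintro ⟨p, ⟨ht, hx⟩, rfl⟩
    exact ⟨ht, by simpa using hx⟩

lemma cylinder_mem_nhds {a b R : ℝ} {z : WithLp 2 (ℝ × E)} (ht : z.fst ∈ Set.Ioo a b)
    (hx : ‖z.snd‖ < R) : cylinder E a b R ∈ 𝓝 z := by
  have hfst : Continuous fun z : WithLp 2 (ℝ × E) => z.fst := by fun_prop
  have hsnd : Continuous fun z : WithLp 2 (ℝ × E) => ‖z.snd‖ := by fun_prop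
  filter_upwards [hfst.continuousAt.eventually (Ioo_mem_nhds ht.1 ht.2),
    hsnd.continuousAt.eventually (Iio_mem_nhds hx)] with y hyt hyx
  exact ⟨⟨hyt.1.le, hyt.2.le⟩, le_of_lt hyx⟩

lemma mem_Ioo_and_norm_lt_of_mem_cylinder {a b R : ℝ} {z : WithLp 2 (ℝ × E)}
    (hz : z ∈ cylinder E a b R) (h : ¬(z.fst = a ∨ z.fst = b ∨ ‖z.snd‖ = R)) :
    z.fst ∈ Set.Ioo a b ∧ ‖z.snd‖ < R := by
  push Not at h
  exact ⟨⟨hz.1.1.lt_of_ne' h.1, hz.1.2.lt_of_ne h.2.1⟩, hz.2.lt_of_ne h.2.2⟩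

lemma continuousOn_cylinder {u : ℝ → E → ℝ} {T a b R : ℝ}
    (hu : ContinuousOn (fun p : ℝ × E => u p.1 p.2) (Set.Icc 0 T ×ˢ Set.univ)) (ha : 0 ≤ a)
    (hb : b ≤ T) :
    ContinuousOn (fun z : WithLp 2 (ℝ × E) => u z.fst z.snd) (cylinder E a b R) :=
  hu.comp (WithLp.prod_continuous_ofLp 2 ℝ E).continuousOn fun _ hz =>
    ⟨⟨ha.trans hz.1.1, hz.1.2.trans hb⟩, trivial⟩

lemma continuousOn_barrier_cylinder [InnerProductSpace ℝ E] {c a a' b R : ℝ} (hc : 0 < c)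
    (ha : a < a') :
    ContinuousOn (fun z : WithLp 2 (ℝ × E) => barrier c a z.fst z.snd) (cylinder E a' b R) :=
  fun z hz => ((contDiffAt_barrier (k := 0) hc (ha.trans_le hz.1.1) z.snd).continuousAt.comp
    (f := fun z : WithLp 2 (ℝ × E) => (z.fst, z.snd))
    (WithLp.prod_continuous_ofLp 2 ℝ E).continuousAt).continuousWithinAt

end Cylinder

section CylinderComparison

lemma two_mul_add_doublingError_le {K Γ e η γ r κ : ℝ} (hK : 0 < K) (hr : 0 ≤ r) (he : 0 < e)
    (hγ : 0 ≤ γ) (hrκ : r ^ 2 / e ≤ κ) (hγe : γ ≤ e) (heκ : e ≤ κ)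
    (hηκ : η * (3 + Γ ^ 2 + 2 * (1 + K) * Γ) ≤ κ) :
    2 * η + doublingError K Γ e η γ r ≤ κ * (6 + 5 * K + 2 * K ^ 2) := by
  have hκ : 0 ≤ κ := he.le.trans heκ
  have hr_le : r ≤ κ := by
    refine le_of_sq_le_sq ?_ hκ
    calc r ^ 2 ≤ κ * e := (div_le_iff₀ he).mp hrκ
      _ ≤ κ ^ 2 := by rw [sq]; gcongr
  have hγr : γ + K * r ≤ e + K * r := by gcongr
  have hcross : r / e * (γ + K * r) ≤ κ + K * κ :=
    calc r / e * (γ + K * r) ≤ r / e * (e + K * r) := by gcongr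
      _ = r + K * (r ^ 2 / e) := by field_simp
      _ ≤ κ + K * κ := by gcongr
  have hsq : (γ + K * r) ^ 2 / (2 * e) ≤ κ + K ^ 2 * κ :=
    calc (γ + K * r) ^ 2 / (2 * e) ≤ (e + K * r) ^ 2 / (2 * e) := by gcongr
      _ ≤ 2 * (e ^ 2 + (K * r) ^ 2) / (2 * e) := by gcongr; exact add_sq_le
      _ = e + K ^ 2 * (r ^ 2 / e) := by field_simp
      _ ≤ κ + K ^ 2 * κ := by gcongr
  calc 2 * η + doublingError K Γ e η γ r
      = (γ + K * r) ^ 2 / (2 * e) + (1 + K) * (r / e * (γ + K * r)) + γ + K * r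
        + η * (3 + Γ ^ 2 + 2 * (1 + K) * Γ) := by unfold doublingError; ring
    _ ≤ (κ + K ^ 2 * κ) + (1 + K) * (κ + K * κ) + κ + K * κ + κ := by
        gcongr; exact hγe.trans heκ
    _ ≤ κ * (6 + 5 * K + 2 * K ^ 2) := by nlinarith [mul_nonneg hκ hK.le]

variable {n d : ℕ} {U V : Type*} [TopologicalSpace U] [CompactSpace U]
  [TopologicalSpace V] [CompactSpace V]
  {T K : ℝ} {b : ℝ → Eucl n → U → V → Eucl n}
  {σ : ℝ → Eucl n → U → V → Matrix (Fin n) (Fin d) ℝ}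
  {f : ℝ → Eucl n → ℝ → Eucl d → U → V → ℝ}

lemma IsaacsData.exists_doubling_parameters (h : IsaacsData T K b σ f) {R r κ : ℝ} (hR : 0 ≤ R)
    (hr : 0 < r) (hκ : 0 < κ) :
    ∃ e δ η, 0 < e ∧ 0 < δ ∧ 0 < η ∧ e ≤ r ∧ δ ≤ r ∧ η ≤ r ∧
      ∀ t ∈ Set.Icc (0 : ℝ) T, ∀ s ∈ Set.Icc (0 : ℝ) T, ∀ x y : Eucl n, ‖x‖ ≤ R → ‖y‖ ≤ R →
        (t - s) ^ 2 / δ + ‖x - y‖ ^ 2 / e ≤ κ →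
        ((∀ u v, ‖b t x u v - b s x u v‖ ≤ e) ∧ (∀ u v, ‖σ t x u v - σ s x u v‖ ≤ e) ∧
          ∀ z : Eucl d, ‖z‖ ≤ ‖x - y‖ / e * (K * (1 + R)) → ∀ u v,
            |f t x 0 z u v - f s x 0 z u v| ≤ e) ∧
        2 * η + doublingError K (K * (1 + R)) e η e ‖x - y‖ ≤ κ * (6 + 5 * K + 2 * K ^ 2) := by
  have hK := h.pos
  set Γ := K * (1 + R)
  set e := min r κ
  have he : 0 < e := lt_min hr hκ
  obtain ⟨ρ, hρ, hmod⟩ := h.exists_time_modulus R (2 * R / e * Γ) 0 he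
  have hΓ : 0 < 3 + Γ ^ 2 + 2 * (1 + K) * Γ := by positivity
  refine ⟨e, min r (ρ ^ 2 / (2 * κ)), min r (κ / (3 + Γ ^ 2 + 2 * (1 + K) * Γ)), he,
    by positivity, by positivity, min_le_left _ _, min_le_left _ _, min_le_left _ _,
    fun t ht s hs x y hx hy hQ => ?_⟩
  set δ := min r (ρ ^ 2 / (2 * κ))
  have hδ : 0 < δ := by positivity
  have htime : (t - s) ^ 2 / δ ≤ κ := (le_add_of_nonneg_right (by positivity)).trans hQ
  have hspace : ‖x - y‖ ^ 2 / e ≤ κ := (le_add_of_nonneg_left (by positivity)).trans hQ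
  have hts : |t - s| < ρ := by
    refine abs_lt_of_sq_lt_sq ?_ hρ.le
    calc (t - s) ^ 2 ≤ κ * δ := (div_le_iff₀ hδ).mp htime
      _ ≤ κ * (ρ ^ 2 / (2 * κ)) := by gcongr; exact min_le_right _ _
      _ = ρ ^ 2 / 2 := by field_simp
      _ < ρ ^ 2 := half_lt_self (by positivity)
  have hxy : ‖x - y‖ ≤ 2 * R := (norm_sub_le x y).trans (by linarith)
  obtain ⟨hb, hσ, hf⟩ := hmod t ht s hs hts x hx
  exact ⟨⟨hb, hσ, fun z hz => hf z (hz.trans (by gcongr))⟩,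
    two_mul_add_doublingError_le hK (norm_nonneg _) he he.le hspace le_rfl (min_le_right _ _)
      ((le_div_iff₀ hΓ).mp (min_le_right _ _))⟩

variable [Nonempty U] [Nonempty V] {g₁ g₂ : Eucl n → ℝ} {u₁ u₂ : ℝ → Eucl n → ℝ}

lemma IsaacsData.le_doublingError_of_hasUpperJet (h : IsaacsData T K b σ f)
    (h₁ : IsViscositySubsolution T (lowerHamiltonian b σ f) g₁ u₁)
    (h₂ : IsViscositySupersolution T (lowerHamiltonian b σ f) g₂ u₂)
    {a α R e η γ : ℝ} {S : Set (WithLp 2 (ℝ × Eucl n))} {z w a₁ a₂ : WithLp 2 (ℝ × Eucl n)}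
    {B₁ B₂ : WithLp 2 (ℝ × Eucl n) →L[ℝ] WithLp 2 (ℝ × Eucl n)} (hα : 0 ≤ α) (he : 0 < e)
    (hη : 0 < η) (hzt : z.fst ∈ Set.Ico 0 T) (hwt : w.fst ∈ Set.Ico 0 T) (haz : a < z.fst)
    (hμ : barrierRate K * (z.fst - a) ≤ 1) (hzx : ‖z.snd‖ ≤ R) (hwx : ‖w.snd‖ ≤ R)
    (hSz : S ∈ nhds z) (hSw : S ∈ nhds w)
    (hj₁ : HasUpperJet S
      (fun z => u₁ z.fst z.snd - α * barrier (barrierRate K) a z.fst z.snd) z a₁ B₁)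
    (hj₂ : HasUpperJet S (fun z => -u₂ z.fst z.snd) w a₂ B₂)
    (hat : |a₁.fst + a₂.fst| ≤ 2 * η) (hax₁ : ‖a₁.snd - e⁻¹ • (z.snd - w.snd)‖ ≤ η)
    (hax₂ : ‖-a₂.snd - e⁻¹ • (z.snd - w.snd)‖ ≤ η)
    (hB : ∀ h k : Eucl n, ⟪B₁ (WithLp.toLp 2 (0, h)), WithLp.toLp 2 (0, h)⟫ +
      ⟪B₂ (WithLp.toLp 2 (0, k)), WithLp.toLp 2 (0, k)⟫ ≤ ‖h - k‖ ^ 2 / e)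
    (hb : ∀ u v, ‖b z.fst z.snd u v - b w.fst z.snd u v‖ ≤ γ)
    (hσ : ∀ u v, ‖σ z.fst z.snd u v - σ w.fst z.snd u v‖ ≤ γ)
    (hf : ∀ y : Eucl d, ‖y‖ ≤ ‖z.snd - w.snd‖ / e * (K * (1 + R)) → ∀ u v,
      |f z.fst z.snd 0 y u v - f w.fst z.snd 0 y u v| ≤ γ) :
    α ≤ 2 * η + doublingError K (K * (1 + R)) e η γ ‖z.snd - w.snd‖ := by
  have hzT := Set.Ico_subset_Icc_self hzt
  obtain ⟨τ, D, M, hτ, hD, hM, hbar⟩ := h.exists_barrier_derivatives hzT haz hμ hα z.snd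
  obtain ⟨N₁, hN₁, hle₁⟩ := h₁.exists_le_of_hasUpperJet hzt
    (χ := fun t x => α * barrier (barrierRate K) a t x)
    (contDiffAt_const.mul (contDiffAt_barrier (barrierRate_pos h.pos) haz z.snd)) hτ hD hM hSz
    hj₁ hη
  obtain ⟨N₂, hN₂, hle₂⟩ := h₂.neg.exists_le_of_hasUpperJet hwt (χ := fun _ _ => 0)
    contDiffAt_const (hasDerivAt_const _ _) (D := fun _ => 0)
    (fun y => hasGradientAt_const _ _) (hasFDerivAt_const _ _) hSw
    (by simpa only [sub_zero] using hj₂) hη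
  have hham := h.hamiltonian_sub_le (p := e⁻¹ • (z.snd - w.snd)) hzT
    (Set.Ico_subset_Icc_self hwt) hzx hwx hη he
    (by rw [norm_smul, norm_inv, Real.norm_of_nonneg he.le, inv_mul_eq_div]) hax₁ hax₂
    (fun k l => by rw [hN₁, hN₂]; linarith [hB k l]) hbar hb hσ hf
  rw [add_sub_cancel, add_sub_cancel] at hham
  simp only [zero_add, neg_zero] at hle₂
  linarith [(abs_le.mp hat).2]

lemma IsaacsData.comparison_cylinder (h : IsaacsData T K b σ f)
    (hc₁ : ContinuousOn (fun p : ℝ × Eucl n => u₁ p.1 p.2) (Set.Icc 0 T ×ˢ Set.univ))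
    (hc₂ : ContinuousOn (fun p : ℝ × Eucl n => u₂ p.1 p.2) (Set.Icc 0 T ×ˢ Set.univ))
    (h₁ : IsViscositySubsolution T (lowerHamiltonian b σ f) g₁ u₁)
    (h₂ : IsViscositySupersolution T (lowerHamiltonian b σ f) g₂ u₂) {a a' t₁ R α : ℝ}
    (ha : 0 ≤ a) (haa' : a < a') (ht₁ : t₁ ≤ T) (hμ : barrierRate K * (t₁ - a) ≤ 1) (hα : 0 < α)
    (hbd : ∀ t ∈ Set.Icc a' t₁, ∀ x : Eucl n, ‖x‖ ≤ R → (t = a' ∨ t = t₁ ∨ ‖x‖ = R) →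
      u₁ t x - α * barrier (barrierRate K) a t x - u₂ t x ≤ 0)
    {t : ℝ} (ht : t ∈ Set.Icc a' t₁) {x : Eucl n} (hx : ‖x‖ ≤ R) :
    u₁ t x - α * barrier (barrierRate K) a t x - u₂ t x ≤ 0 := by
  by_contra! hpos
  have hK := h.pos
  have hrate := barrierRate_pos hK
  have ha' : 0 ≤ a' := ha.trans haa'.le
  have hκ : 0 < α / (2 * (6 + 5 * K + 2 * K ^ 2)) := by positivity
  obtain ⟨r, hr, hdoubling⟩ := exists_localized_doubling (isCompact_cylinder a' t₁ R)
    ((continuousOn_cylinder hc₁ ha' ht₁).sub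
      (continuousOn_const.mul (continuousOn_barrier_cylinder hrate haa')))
    (continuousOn_cylinder hc₂ ha' ht₁).neg (z₀ := WithLp.toLp 2 (t, x)) ⟨ht, hx⟩
    (by simpa [sub_eq_add_neg] using hpos) hκ
  obtain ⟨e, δ, η, he, hδ, hη, her, hδr, hηr, hparam⟩ :=
    h.exists_doubling_parameters ((norm_nonneg x).trans hx) hr hκ
  obtain ⟨z, hz, w, hw, a₁, a₂, B₁, B₂, hpz, hpw, hQ, hj₁, hj₂, hat, hax₁, hax₂, hB⟩ :=
    hdoubling e δ η he hδ hη her hδr hηr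
  have hinterior : ∀ y ∈ cylinder (Eucl n) a' t₁ R,
      0 < u₁ y.fst y.snd - α * barrier (barrierRate K) a y.fst y.snd + -u₂ y.fst y.snd →
      y.fst ∈ Set.Ioo a' t₁ ∧ ‖y.snd‖ < R := fun y hy hpy =>
    mem_Ioo_and_norm_lt_of_mem_cylinder hy fun hy' => by
      linarith [hbd y.fst hy.1 y.snd hy.2 hy']
  obtain ⟨hzt, hzx⟩ := hinterior z hz hpz
  obtain ⟨hwt, hwx⟩ := hinterior w hw hpw
  have hIoo : Set.Ioo a' t₁ ⊆ Set.Ico 0 T := fun s hs => ⟨ha'.trans hs.1.le, hs.2.trans_le ht₁⟩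
  have hzμ : barrierRate K * (z.fst - a) ≤ 1 := hμ.trans' (by gcongr; exact hzt.2.le)
  obtain ⟨⟨hb, hσ, hf⟩, herr⟩ := hparam _ (Set.Ico_subset_Icc_self (hIoo hzt)) _
    (Set.Ico_subset_Icc_self (hIoo hwt)) _ _ hz.2 hw.2 hQ
  have hle := h.le_doublingError_of_hasUpperJet h₁ h₂ hα.le he hη (hIoo hzt) (hIoo hwt)
    (haa'.trans hzt.1) hzμ hz.2 hw.2 (cylinder_mem_nhds hzt hzx) (cylinder_mem_nhds hwt hwx)
    hj₁ hj₂ hat hax₁ hax₂ hB hb hσ hf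
  have hhalf : α / (2 * (6 + 5 * K + 2 * K ^ 2)) * (6 + 5 * K + 2 * K ^ 2) = α / 2 := by
    field_simp
  linarith

end CylinderComparison

section Comparison

/-- A growth bound of the form `o(exp(A (log √(1 + |x|²))²))`, uniformly in time. -/
def HasLogGrowth {n : ℕ} (T A : ℝ) (w : ℝ → Eucl n → ℝ) : Prop :=
  ∀ ε > (0 : ℝ), ∃ R : ℝ, ∀ t ∈ Set.Icc (0 : ℝ) T, ∀ x : Eucl n, R ≤ ‖x‖ →
    |w t x| ≤ ε * Real.exp (A * Real.log ((‖x‖ ^ 2 + 1) ^ ((1 : ℝ) / 2)) ^ 2)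

lemma MemTheta.exists_hasLogGrowth {n : ℕ} {T : ℝ} {w : ℝ → Eucl n → ℝ} (h : MemTheta T w) :
    ∃ A₀ > 0, ∀ A ≥ A₀, HasLogGrowth T A w := by
  obtain ⟨A₀, hA₀, hgrowth⟩ := h.2
  refine ⟨A₀, hA₀, fun A hA ε hε => ?_⟩
  obtain ⟨R, hR⟩ := hgrowth ε hε
  refine ⟨R, fun t ht x hx => ?_⟩
  have hle := hR t ht x hx
  rw [neg_mul, Real.exp_neg, ← div_eq_mul_inv, div_le_iff₀ (Real.exp_pos _)] at hle
  exact hle.trans (by gcongr)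

lemma HasLogGrowth.exists_sub_le_mul_barrier {n : ℕ} {T A : ℝ} {u₁ u₂ : ℝ → Eucl n → ℝ}
    (h₁ : HasLogGrowth T A u₁) (h₂ : HasLogGrowth T A u₂) (hA : 0 ≤ A) {α : ℝ} (hα : 0 < α)
    (c a : ℝ) :
    ∃ R, ∀ t ∈ Set.Icc 0 T, A ≤ (c * (t - a))⁻¹ → ∀ x, R ≤ ‖x‖ →
      u₁ t x - u₂ t x ≤ α * barrier c a t x := by
  obtain ⟨R₁, hR₁⟩ := h₁ (α / 2) (half_pos hα)
  obtain ⟨R₂, hR₂⟩ := h₂ (α / 2) (half_pos hα)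
  refine ⟨max R₁ R₂, fun t ht hAt x hx => ?_⟩
  have hle₁ := (le_abs_self _).trans (hR₁ t ht x ((le_max_left _ _).trans hx))
  have hle₂ := (neg_le_abs _).trans (hR₂ t ht x ((le_max_right _ _).trans hx))
  have hbarrier := mul_le_mul_of_nonneg_left (exp_le_barrier hAt hA x) hα.le
  linarith

lemma exists_forall_le_mul_barrier {E : Type*} [NormedAddCommGroup E] {c a t α : ℝ} (hc : 0 < c)
    (hat : a < t) (hα : 0 < α) (N : ℝ) :
    ∃ a' ∈ Set.Ioc a t, ∀ x : E, N ≤ α * barrier c a a' x := by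
  set δ := min (t - a) (α / (c * (|N| + 1)))
  have hδ : 0 < δ := lt_min (sub_pos.mpr hat) (by positivity)
  have hδt : δ ≤ t - a := min_le_left _ _
  refine ⟨a + δ, ⟨by linarith, by linarith⟩, fun x => ?_⟩
  have hcδ : c * (a + δ - a) = c * δ := by rw [add_sub_cancel_left]
  have hNδ : δ * (c * (|N| + 1)) ≤ α := (le_div_iff₀ (by positivity)).mp (min_le_right _ _)
  calc N ≤ |N| + 1 := (le_abs_self N).trans (le_add_of_nonneg_right zero_le_one)
    _ ≤ α * (c * (a + δ - a))⁻¹ := by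
      rw [hcδ, ← div_eq_mul_inv, le_div_iff₀ (by positivity)]
      linarith
    _ ≤ α * barrier c a (a + δ) x := by
      gcongr
      exact inv_le_barrier (by rw [hcδ]; positivity) x

lemma forall_Ioc_of_backward_steps {T τ : ℝ} (hτ : 0 < τ) {P : ℝ → Prop} (hT : P T)
    (hstep : ∀ a t₁, 0 ≤ a → t₁ ≤ T → t₁ - a ≤ τ → P t₁ → ∀ t ∈ Set.Ioc a t₁, P t) :
    ∀ t ∈ Set.Ioc 0 T, P t := by
  have hforall : ∀ k : ℕ, ∀ t ∈ Set.Ioc 0 T, T - t ≤ k * (τ / 2) → P t := by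
    intro k
    induction k with
    | zero =>
      intro t ht htk
      rwa [le_antisymm ht.2 (by simpa using htk)]
    | succ k ih =>
      intro t ht htk
      push_cast at htk
      have ht_le : t ≤ min T (t + τ / 2) := le_min ht.2 (by linarith)
      refine hstep (max 0 (t - τ / 2)) (min T (t + τ / 2)) (le_max_left _ _) (min_le_left _ _)
        (by linarith [le_max_right 0 (t - τ / 2), min_le_right T (t + τ / 2)])
        (ih _ ⟨ht.1.trans_le ht_le, min_le_left _ _⟩ ?_)
        t ⟨max_lt ht.1 (by linarith), ht_le⟩
      rw [sub_le_comm, le_min_iff]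
      exact ⟨sub_le_self T (by positivity), by linarith⟩
  intro t ht
  obtain ⟨k, hk⟩ := exists_nat_ge ((T - t) / (τ / 2))
  exact hforall k t ht ((div_le_iff₀ (half_pos hτ)).mp hk)

variable {n d : ℕ} {U V : Type*} [TopologicalSpace U] [CompactSpace U] [Nonempty U]
  [TopologicalSpace V] [CompactSpace V] [Nonempty V]
  {T K : ℝ} {b : ℝ → Eucl n → U → V → Eucl n}
  {σ : ℝ → Eucl n → U → V → Matrix (Fin n) (Fin d) ℝ}
  {f : ℝ → Eucl n → ℝ → Eucl d → U → V → ℝ} {u₁ u₂ : ℝ → Eucl n → ℝ}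

lemma IsaacsData.sub_le_mul_barrier {g₁ g₂ : Eucl n → ℝ} (h : IsaacsData T K b σ f)
    (hc₁ : ContinuousOn (fun p : ℝ × Eucl n => u₁ p.1 p.2) (Set.Icc 0 T ×ˢ Set.univ))
    (hc₂ : ContinuousOn (fun p : ℝ × Eucl n => u₂ p.1 p.2) (Set.Icc 0 T ×ˢ Set.univ))
    (h₁ : IsViscositySubsolution T (lowerHamiltonian b σ f) g₁ u₁)
    (h₂ : IsViscositySupersolution T (lowerHamiltonian b σ f) g₂ u₂) {A : ℝ} (hA : 0 ≤ A)
    (hg₁ : HasLogGrowth T A u₁) (hg₂ : HasLogGrowth T A u₂) {a t₁ : ℝ} (ha : 0 ≤ a)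
    (ht₁ : t₁ ≤ T) (hμ : barrierRate K * (t₁ - a) * (A + 1) ≤ 1)
    (hle : ∀ x, u₁ t₁ x ≤ u₂ t₁ x) {t : ℝ} (ht : t ∈ Set.Ioc a t₁) (x : Eucl n) {α : ℝ}
    (hα : 0 < α) : u₁ t x - u₂ t x ≤ α * barrier (barrierRate K) a t x := by
  have hc := barrierRate_pos h.pos
  have hct₁ : 0 < barrierRate K * (t₁ - a) := mul_pos hc (sub_pos.mpr (ht.1.trans_le ht.2))
  obtain ⟨R₀, hR₀⟩ := hg₁.exists_sub_le_mul_barrier hg₂ hA hα (barrierRate K) a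
  obtain ⟨R, hR₀R, hxR⟩ : ∃ R, R₀ ≤ R ∧ ‖x‖ ≤ R := ⟨max R₀ ‖x‖, le_max_left _ _, le_max_right _ _⟩
  obtain ⟨N, hN⟩ :=
    (isCompact_Icc.prod (isCompact_closedBall (0 : Eucl n) R)).exists_bound_of_continuousOn
      ((hc₁.sub hc₂).mono (Set.prod_mono subset_rfl (Set.subset_univ _)))
  obtain ⟨a', ⟨haa', ha't⟩, hNa'⟩ := exists_forall_le_mul_barrier (E := Eucl n) hc ht.1 hα N
  suffices u₁ t x - α * barrier (barrierRate K) a t x - u₂ t x ≤ 0 by linarith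
  refine h.comparison_cylinder hc₁ hc₂ h₁ h₂ ha haa' ht₁ (by nlinarith) hα
    (fun s hs y hy hsy => ?_) ⟨ha't, ht.2⟩ hxR
  have has : a < s := haa'.trans_le hs.1
  have hsT : s ∈ Set.Icc 0 T := ⟨ha.trans has.le, hs.2.trans ht₁⟩
  rcases hsy with rfl | rfl | hyR
  · have hbound : |u₁ s y - u₂ s y| ≤ N := hN (s, y) ⟨hsT, mem_closedBall_zero_iff.mpr hy⟩
    linarith [le_abs_self (u₁ s y - u₂ s y), hNa' y]
  · linarith [hle y, mul_pos hα (barrier_pos (barrierRate K) a s y)]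
  · have hcs : 0 < barrierRate K * (s - a) := mul_pos hc (sub_pos.mpr has)
    have hcs_le : barrierRate K * (s - a) ≤ barrierRate K * (t₁ - a) := by gcongr; exact hs.2
    have hAs : A ≤ (barrierRate K * (s - a))⁻¹ := by
      rw [← one_div, le_div_iff₀ hcs]
      nlinarith
    linarith [hR₀ s hsT hAs y (hR₀R.trans_eq hyR.symm)]

lemma IsaacsData.comparison_of_mem_Ioc {Φ : Eucl n → ℝ} (h : IsaacsData T K b σ f)
    (hΘ₁ : MemTheta T u₁) (hΘ₂ : MemTheta T u₂)
    (h₁ : IsViscositySubsolution T (lowerHamiltonian b σ f) Φ u₁)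
    (h₂ : IsViscositySupersolution T (lowerHamiltonian b σ f) Φ u₂) :
    ∀ t ∈ Set.Ioc 0 T, ∀ x, u₁ t x ≤ u₂ t x := by
  obtain ⟨A₁, hA₁, hg₁⟩ := hΘ₁.exists_hasLogGrowth
  obtain ⟨A₂, hA₂, hg₂⟩ := hΘ₂.exists_hasLogGrowth
  set A := A₁ + A₂
  have hA : 0 ≤ A := by positivity
  have hcA : 0 < barrierRate K * (A + 1) := mul_pos (barrierRate_pos h.pos) (by positivity)
  refine forall_Ioc_of_backward_steps (inv_pos.mpr hcA)
    (fun x => (h₁.1 x).trans (h₂.1 x)) fun a t₁ ha ht₁ hat₁ hle t ht x => ?_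
  have hμ : barrierRate K * (t₁ - a) * (A + 1) ≤ 1 :=
    calc barrierRate K * (t₁ - a) * (A + 1) = (t₁ - a) * (barrierRate K * (A + 1)) := by ring
      _ ≤ 1 := by rwa [← le_div_iff₀ hcA, one_div]
  have hbarrier := barrier_pos (barrierRate K) a t x
  refine le_of_forall_pos_le_add fun ε hε => ?_
  have hle_ε := h.sub_le_mul_barrier hΘ₁.1 hΘ₂.1 h₁ h₂ hA (hg₁ A (by linarith))
    (hg₂ A (by linarith)) ha ht₁ hμ hle ht x (div_pos hε hbarrier)
  rw [div_mul_cancel₀ _ hbarrier.ne'] at hle_ε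
  linarith

theorem uniqueness_viscosity_isaacs_lower_general {Φ : Eucl n → ℝ} (h : IsaacsData T K b σ f)
    (hΘ₁ : MemTheta T u₁) (hΘ₂ : MemTheta T u₂)
    (h₁ : IsViscositySubsolution T (lowerHamiltonian b σ f) Φ u₁)
    (h₂ : IsViscositySupersolution T (lowerHamiltonian b σ f) Φ u₂) :
    ∀ t ∈ Set.Icc 0 T, ∀ x, u₁ t x ≤ u₂ t x := by
  intro t ht x
  rcases ht.2.eq_or_lt with rfl | htT
  · exact (h₁.1 x).trans (h₂.1 x)
  have hcont : ∀ w : ℝ → Eucl n → ℝ, MemTheta T w →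
      ContinuousWithinAt (fun s => w s x) (Set.Ioc 0 T) t := fun w hw =>
    ((hw.1.comp (Continuous.prodMk_left x).continuousOn fun s hs => ⟨hs, trivial⟩) t ht).mono
      Set.Ioc_subset_Icc_self
  exact ContinuousWithinAt.closure_le (f := fun s => u₁ s x) (g := fun s => u₂ s x)
    (by rwa [closure_Ioc (ht.1.trans_lt htT).ne]) (hcont u₁ hΘ₁) (hcont u₂ hΘ₂)
    fun s hs => h.comparison_of_mem_Ioc hΘ₁ hΘ₂ h₁ h₂ s hs x

end Comparison

/-- **Theorem 6.1 (uniqueness).** Two viscosity solutions in `Θ` of the lower Isaacs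
equation coincide on `[0,T]×ℝⁿ`. -/
theorem uniqueness_viscosity_isaacs_lower
    {n d : ℕ} (hn : 1 ≤ n) (hd : 1 ≤ d) {T : ℝ} (hT : 0 < T)
    {U V : Type*} [MetricSpace U] [CompactSpace U] [Nonempty U]
    [MetricSpace V] [CompactSpace V] [Nonempty V]
    (b : ℝ → Eucl n → U → V → Eucl n)
    (σ : ℝ → Eucl n → U → V → Matrix (Fin n) (Fin d) ℝ)
    (f : ℝ → Eucl n → ℝ → Eucl d → U → V → ℝ)
    (Φ : Eucl n → ℝ)
    -- (H4.1)(i): for fixed `x`, `b(·,x,·,·)` and `σ(·,x,·,·)` are continuous in `(t,u,v)`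
    (hb_cont : ∀ x : Eucl n, ContinuousOn
      (fun q : ℝ × U × V => b q.1 x q.2.1 q.2.2)
      (Set.Icc (0 : ℝ) T ×ˢ (Set.univ : Set (U × V))))
    (hσ_cont : ∀ x : Eucl n, ContinuousOn
      (fun q : ℝ × U × V => σ q.1 x q.2.1 q.2.2)
      (Set.Icc (0 : ℝ) T ×ˢ (Set.univ : Set (U × V))))
    -- (H4.1)(ii): `b` and `σ` are Lipschitz in `x`, uniformly in `(t,u,v)`
    (hbσ_lip : ∃ C > (0 : ℝ), ∀ t ∈ Set.Icc (0 : ℝ) T, ∀ (x x' : Eucl n) (u : U) (v : V),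
      ‖b t x u v - b t x' u v‖ + ‖σ t x u v - σ t x' u v‖ ≤ C * ‖x - x'‖)
    -- (H4.2)(i): for fixed `(x,y,z)`, `f(·,x,y,z,·,·)` is continuous in `(t,u,v)`
    (hf_cont : ∀ (x : Eucl n) (y : ℝ) (z : Eucl d), ContinuousOn
      (fun q : ℝ × U × V => f q.1 x y z q.2.1 q.2.2)
      (Set.Icc (0 : ℝ) T ×ˢ (Set.univ : Set (U × V))))
    -- (H4.2): `f` is Lipschitz in `(x,y,z)`, uniformly in `(t,u,v)`
    (hf_lip : ∃ C > (0 : ℝ), ∀ t ∈ Set.Icc (0 : ℝ) T,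
      ∀ (x x' : Eucl n) (y y' : ℝ) (z z' : Eucl d) (u : U) (v : V),
      |f t x y z u v - f t x' y' z' u v| ≤ C * (‖x - x'‖ + |y - y'| + ‖z - z'‖))
    -- (H4.2): `Φ` is Lipschitz
    (hΦ_lip : ∃ C > (0 : ℝ), ∀ x x' : Eucl n, |Φ x - Φ x'| ≤ C * ‖x - x'‖)
    (u₁ u₂ : ℝ → Eucl n → ℝ)
    (hu₁Θ : MemTheta T u₁) (hu₂Θ : MemTheta T u₂)
    (hsol₁ : IsViscositySolution T (lowerHamiltonian b σ f) Φ u₁)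
    (hsol₂ : IsViscositySolution T (lowerHamiltonian b σ f) Φ u₂) :
    ∀ t ∈ Set.Icc (0 : ℝ) T, ∀ x : Eucl n, u₁ t x = u₂ t x := by
  obtain ⟨K, h⟩ := exists_isaacsData hb_cont hσ_cont hbσ_lip hf_cont hf_lip
  exact fun t ht x => le_antisymm
    (uniqueness_viscosity_isaacs_lower_general h hu₁Θ hu₂Θ hsol₁.1 hsol₂.2 t ht x)
    (uniqueness_viscosity_isaacs_lower_general h hu₂Θ hu₁Θ hsol₂.1 hsol₁.2 t ht x)
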